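/- arXiv:1201.0697 — 6 statements merged into one kernel-verified Lean document; each statement's English description precedes it below -/
import Mathlib

section
/- For every finite subset W of the vertices of the infinite hexagonal grid G∞, the number of neighbor vertices satisfies |𝒩(W)| ≥ √6 · √|W|. -/
/-- Adjacency of the infinite hexagonal grid `G∞` in brick-wall coordinates on `ℤ × ℤ`:
`(x,y)` and `(x',y')` are adjacent iff `y' = y` and `|x' - x| = 1`, or
`x' = x` and `|y' - y| = 1` and `x + min y y'` is even. -/
def hexAdj (v w : ℤ × ℤ) : Prop :=
  (v.2 = w.2 ∧ (v.1 - w.1).natAbs = 1) ∨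
  (v.1 = w.1 ∧ (v.2 - w.2).natAbs = 1 ∧ Even (v.1 + min v.2 w.2))

/-- The neighborhood `𝒩(W)`: vertices not in `W` adjacent to some vertex of `W`. -/
def hexNbhd (W : Set (ℤ × ℤ)) : Set (ℤ × ℤ) :=
  {v | v ∉ W ∧ ∃ w ∈ W, hexAdj v w}

/-- The boundary `ℬ(W)`: vertices of `W` adjacent to some vertex not in `W`. -/
def hexBdry (W : Set (ℤ × ℤ)) : Set (ℤ × ℤ) :=
  {v | v ∈ W ∧ ∃ w, w ∉ W ∧ hexAdj v w}

/-- The outgoing edges `ℰ(W)`, encoded as ordered pairs `(v, w)` with `v ∈ W`, `w ∉ W`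
and `v` adjacent to `w`; each edge with exactly one endpoint in `W` corresponds to
exactly one such pair. -/
def hexCutEdges (W : Set (ℤ × ℤ)) : Set ((ℤ × ℤ) × (ℤ × ℤ)) :=
  {p | p.1 ∈ W ∧ p.2 ∉ W ∧ hexAdj p.1 p.2}

/-- The hexagonal cell `C(a,b)`, with vertex set `{(2a+b+i, b+j) : i ∈ {0,1,2}, j ∈ {0,1}}`. -/
def hexCell (a b : ℤ) : Set (ℤ × ℤ) :=
  {(2*a+b, b), (2*a+b+1, b), (2*a+b+2, b),
   (2*a+b, b+1), (2*a+b+1, b+1), (2*a+b+2, b+1)}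

/-- The vertex set `V(G_r)` of the finite hexagonal grid of radius `r`: the union of the
cells `C(a,b)` with `(|a| + |b| + |a+b|)/2 ≤ r - 1`. -/
def gridVerts (r : ℕ) : Set (ℤ × ℤ) :=
  {v | ∃ a b : ℤ, a.natAbs + b.natAbs + (a+b).natAbs ≤ 2*(r-1) ∧ v ∈ hexCell a b}

/-- `𝒩_{G_r}(W)`: vertices of `V(G_r) \ W` adjacent to some vertex of `W`. -/
def hexNbhdIn (r : ℕ) (W : Set (ℤ × ℤ)) : Set (ℤ × ℤ) :=
  {v | v ∈ gridVerts r ∧ v ∉ W ∧ ∃ w ∈ W, hexAdj v w}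

/-- `ℬ_{G_r}(W)`: vertices of `W` adjacent to some vertex of `V(G_r) \ W`. -/
def hexBdryIn (r : ℕ) (W : Set (ℤ × ℤ)) : Set (ℤ × ℤ) :=
  {v | v ∈ W ∧ ∃ w, w ∈ gridVerts r ∧ w ∉ W ∧ hexAdj v w}

/-- `ℰ_{G_r}(W)`: the edges of `G_r` with exactly one endpoint in `W ⊆ V(G_r)`, encoded
as ordered pairs `(v, w)` with `v ∈ W`, `w ∈ V(G_r) \ W`, `v` adjacent to `w`. -/
def hexCutEdgesIn (r : ℕ) (W : Set (ℤ × ℤ)) : Set ((ℤ × ℤ) × (ℤ × ℤ)) :=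
  {p | p.1 ∈ W ∧ p.2 ∈ gridVerts r ∧ p.2 ∉ W ∧ hexAdj p.1 p.2}

/-- The index `ind_i(x,y)` of the direction-`i` row containing `(x,y)`
(directions numbered `0, 1, 2` for the paper's `1, 2, 3`):
`ind_1 = y`, `ind_2 = ⌊(y-x)/2⌋`, `ind_3 = ⌊(x+y)/2⌋`. -/
def rowInd : Fin 3 → ℤ × ℤ → ℤ
  | 0, v => v.2
  | 1, v => Int.fdiv (v.2 - v.1) 2
  | 2, v => Int.fdiv (v.1 + v.2) 2

/-- The linear parameter `p_i` along direction-`i` rows: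
`p_1 = x`, `p_2 = x + y`, `p_3 = x - y`. -/
def rowParam : Fin 3 → ℤ × ℤ → ℤ
  | 0, v => v.1
  | 1, v => v.1 + v.2
  | 2, v => v.1 - v.2

/-- A set of integers is consecutive if it contains every integer between any two of
its elements. -/
def ConsecutiveSet (S : Set ℤ) : Prop :=
  ∀ a ∈ S, ∀ b ∈ S, ∀ k : ℤ, a ≤ k → k ≤ b → k ∈ S

/-- `v` is an outermost neighbor of `W` for direction `i`: the direction-`i` row of `v`
is gray, and the parameter of `v` is `m - 1` or `M + 1`, where `m` and `M` are the
minimum and maximum of the parameter over `W` intersected with that row. -/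
def IsOutermostNeighbor (W : Set (ℤ × ℤ)) (i : Fin 3) (v : ℤ × ℤ) : Prop :=
  (rowParam i v + 1 ∈ rowParam i '' {w ∈ W | rowInd i w = rowInd i v} ∧
    ∀ q ∈ rowParam i '' {w ∈ W | rowInd i w = rowInd i v}, rowParam i v + 1 ≤ q) ∨
  (rowParam i v - 1 ∈ rowParam i '' {w ∈ W | rowInd i w = rowInd i v} ∧
    ∀ q ∈ rowParam i '' {w ∈ W | rowInd i w = rowInd i v}, q ≤ rowParam i v - 1)

/-!
Count the rows, over the three directions, that meet `W`. Every such row contains two outermost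
neighbors of `W`. A vertex lies on three rows, each containing two of its three neighbors; some two
of these neighbors are both in `W` or both outside `W`, and then the vertex is not outermost in the
direction of the row through those two. Hence each vertex is outermost in at most two directions,
and the number of rows is at most `|𝒩(W)|`.

Conversely a vertex is determined by its three row indices, which satisfy
`-ind₁ + ind₂ + ind₃ ∈ {-1, 0}`. It remains to see that at most `(|X| + |Y| + |Z|)² / 6` triples of
`X × Y × Z` have their sum in a two-element set. If `X` is the smallest of the three sets, then
deleting the maximum of `Y` and the minimum of `Z` destroys at most `2|X|` triples, which the
decrease of the quadratic bound pays for up to a rounding error.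
-/

open Finset
open scoped Pointwise

section SumTriples

variable {G : Type*}

/-- The triples of `X × Y × Z` whose sum lies in `T`. The vertices of the grid are counted as such
triples `(-ind₁, ind₂, ind₃)`; the sign makes the three index sets enter symmetrically. -/
def sumTriples [Add G] [DecidableEq G] (X Y Z T : Finset G) : Finset (G × G × G) :=
  {w ∈ X ×ˢ Y ×ˢ Z | w.1 + w.2.1 + w.2.2 ∈ T}

lemma mem_sumTriples [Add G] [DecidableEq G] {X Y Z T : Finset G} {w : G × G × G} :
    w ∈ sumTriples X Y Z T ↔
      (w.1 ∈ X ∧ w.2.1 ∈ Y ∧ w.2.2 ∈ Z) ∧ w.1 + w.2.1 + w.2.2 ∈ T := by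
  simp only [sumTriples, mem_filter, mem_product]

lemma card_sumTriples_le_mul [Add G] [DecidableEq G] (X Y Z T : Finset G) :
    #(sumTriples X Y Z T) ≤ #X * (#Y * #Z) := by
  rw [← card_product, ← card_product]
  exact card_filter_le _ _

lemma card_sumTriples_rotate [AddCommSemigroup G] [DecidableEq G] (X Y Z T : Finset G) :
    #(sumTriples X Y Z T) = #(sumTriples Y Z X T) := by
  refine card_nbij' (fun w ↦ (w.2.1, w.2.2, w.1)) (fun w ↦ (w.2.2, w.1, w.2.1)) ?_ ?_
    (fun _ _ ↦ rfl) (fun _ _ ↦ rfl)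
  · rintro ⟨x, y, z⟩ hw
    rw [mem_coe, mem_sumTriples] at hw ⊢
    exact ⟨⟨hw.1.2.1, hw.1.2.2, hw.1.1⟩, by rw [add_comm, ← add_assoc]; exact hw.2⟩
  · rintro ⟨y, z, x⟩ hw
    rw [mem_coe, mem_sumTriples] at hw ⊢
    exact ⟨⟨hw.1.2.2, hw.1.1, hw.1.2.1⟩, by rw [add_assoc, add_comm]; exact hw.2⟩

lemma eq_and_eq_of_add_eq_add_of_extremal [AddCommMonoid G] [PartialOrder G]
    [IsOrderedCancelAddMonoid G] {Y Z : Set G} {β γ y z y' z' : G}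
    (hβ : IsGreatest Y β) (hγ : IsLeast Z γ)
    (hy : y ∈ Y) (hz : z ∈ Z) (hy' : y' ∈ Y) (hz' : z' ∈ Z)
    (h : y = β ∨ z = γ) (h' : y' = β ∨ z' = γ) (hadd : y + z = y' + z') : y = y' ∧ z = z' := by
  rcases h with rfl | rfl <;> rcases h' with rfl | rfl
  · exact ⟨rfl, add_left_cancel hadd⟩
  · exact ((add_eq_add_iff_eq_and_eq (hβ.2 hy') (hγ.2 hz)).mp hadd.symm).imp Eq.symm Eq.symm
  · exact (add_eq_add_iff_eq_and_eq (hβ.2 hy) (hγ.2 hz')).mp hadd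
  · exact ⟨add_right_cancel hadd, rfl⟩

variable [AddCommMonoid G] [LinearOrder G] [IsOrderedCancelAddMonoid G]

lemma card_sumTriples_le_erase_add (X T : Finset G) {Y Z : Finset G} {β γ : G}
    (hβ : IsGreatest (Y : Set G) β) (hγ : IsLeast (Z : Set G) γ) :
    #(sumTriples X Y Z T) ≤ #(sumTriples X (Y.erase β) (Z.erase γ) T) + #X * #T := by
  rw [← card_filter_add_card_filter_not (s := sumTriples X Y Z T) (fun w ↦ w.2.1 = β ∨ w.2.2 = γ),
    add_comm]
  refine add_le_add (card_le_card fun w hw ↦ ?_) ?_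
  · simp only [mem_filter, mem_sumTriples, mem_erase] at hw ⊢
    tauto
  · rw [← card_product]
    refine card_le_card_of_injOn (fun w ↦ (w.1, w.1 + w.2.1 + w.2.2)) (fun w hw ↦ ?_) ?_
    · simp only [mem_coe, mem_filter, mem_sumTriples] at hw
      exact mem_product.mpr ⟨hw.1.1.1, hw.1.2⟩
    · rintro ⟨x, y, z⟩ hw ⟨x', y', z'⟩ hw' h
      simp only [mem_coe, mem_filter, mem_sumTriples] at hw hw'
      obtain ⟨rfl, hadd⟩ := Prod.mk.inj h
      rw [add_assoc, add_assoc] at hadd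
      obtain ⟨rfl, rfl⟩ := eq_and_eq_of_add_eq_add_of_extremal hβ hγ hw.1.1.2.1 hw.1.1.2.2
        hw'.1.1.2.1 hw'.1.1.2.2 hw.2 hw'.2 (add_left_cancel hadd)
      rfl

-- The parity term is what makes the inductive step work when `s + 2 = 3 * x`: the bound is then
-- missed by at most `4`, while the two sides agree modulo `6`.
lemma six_mul_add_parity_le_sq {s x f g : ℕ} (hx : 3 * x ≤ s + 2)
    (hg : 6 * g + 3 * (s % 2) ≤ s ^ 2) (hf : f ≤ g + x * 2) :
    6 * f + 3 * ((s + 2) % 2) ≤ (s + 2) ^ 2 := by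
  have hsq : (s + 2) ^ 2 = s ^ 2 + 4 * s + 4 := by ring
  rcases hx.lt_or_eq with hlt | heq
  · omega
  · have hmod : (s + 2) ^ 2 % 6 = 3 * ((s + 2) % 2) := by
      rw [← heq]
      rcases Nat.even_or_odd' x with ⟨j, rfl | rfl⟩
      · rw [show (3 * (2 * j)) ^ 2 = 6 * (6 * j ^ 2) by ring]
        omega
      · rw [show (3 * (2 * j + 1)) ^ 2 = 6 * (6 * j ^ 2 + 6 * j + 1) + 3 by ring]
        omega
    omega

theorem six_mul_card_sumTriples_add_parity_le (X Y Z : Finset G) {T : Finset G} (hT : #T ≤ 2)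
    (hne : #X + #Y + #Z ≠ 1) :
    6 * #(sumTriples X Y Z T) + 3 * ((#X + #Y + #Z) % 2) ≤ (#X + #Y + #Z) ^ 2 := by
  induction hn : #X + #Y + #Z using Nat.strong_induction_on generalizing X Y Z with
  | h n ih =>
    wlog hmin : #X ≤ #Y ∧ #X ≤ #Z generalizing X Y Z
    · rcases le_total #Y #Z with hYZ | hZY
      · rw [card_sumTriples_rotate]
        exact this Y Z X (by omega) (by omega) (by omega)
      · rw [← card_sumTriples_rotate]
        exact this Z X Y (by omega) (by omega) (by omega)
    obtain ⟨hXY, hXZ⟩ := hmin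
    have hmul := card_sumTriples_le_mul X Y Z T
    rcases Nat.eq_zero_or_pos #X with hX | hX
    · rw [hX, zero_mul] at hmul
      have hsq : 3 * (n % 2) ≤ n ^ 2 := by
        rcases Nat.eq_zero_or_pos n with hn0 | hn0
        · simp [hn0]
        · nlinarith [Nat.mod_lt n two_pos, show 2 ≤ n by omega]
      omega
    rcases eq_or_ne n 3 with rfl | hn3
    · rw [show #X = 1 by omega, show #Y = 1 by omega, show #Z = 1 by omega] at hmul
      omega
    have hY : Y.Nonempty := card_pos.mp (by omega)
    have hZ : Z.Nonempty := card_pos.mp (by omega)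
    have hcardY := card_erase_add_one (Y.max'_mem hY)
    have hcardZ := card_erase_add_one (Z.min'_mem hZ)
    have hpeel := card_sumTriples_le_erase_add X T (Y.isGreatest_max' hY) (Z.isLeast_min' hZ)
    obtain ⟨s, rfl⟩ : ∃ s, n = s + 2 := ⟨n - 2, by omega⟩
    exact six_mul_add_parity_le_sq (by omega)
      (ih s (by omega) X (Y.erase (Y.max' hY)) (Z.erase (Z.min' hZ)) (by omega) (by omega))
      (hpeel.trans (Nat.add_le_add_left (Nat.mul_le_mul_left _ hT) _))

end SumTriples

section Rows

lemma rowInd_zero (v : ℤ × ℤ) : rowInd 0 v = v.2 := rfl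

lemma rowInd_one (v : ℤ × ℤ) : rowInd 1 v = (v.2 - v.1) / 2 :=
  Int.fdiv_eq_ediv_of_nonneg _ zero_le_two

lemma rowInd_two (v : ℤ × ℤ) : rowInd 2 v = (v.1 + v.2) / 2 :=
  Int.fdiv_eq_ediv_of_nonneg _ zero_le_two

lemma card_le_card_sumTriples_rowInd (W : Finset (ℤ × ℤ)) :
    #W ≤ #(sumTriples (-W.image (rowInd 0)) (W.image (rowInd 1)) (W.image (rowInd 2)) {-1, 0}) := by
  refine card_le_card_of_injOn (fun v ↦ (-rowInd 0 v, rowInd 1 v, rowInd 2 v)) (fun v hv ↦ ?_) ?_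
  · have hmem (i : Fin 3) : rowInd i v ∈ W.image (rowInd i) := mem_image_of_mem _ hv
    refine mem_sumTriples.mpr ⟨⟨neg_mem_neg (hmem 0), hmem 1, hmem 2⟩, ?_⟩
    simp only [rowInd_zero, rowInd_one, rowInd_two, mem_insert, mem_singleton]
    omega
  · rintro ⟨x, y⟩ - ⟨x', y'⟩ - h
    simp only [rowInd_zero, rowInd_one, rowInd_two, Prod.mk.injEq] at h ⊢
    omega

theorem six_mul_card_le_sq_sum_card_rows (W : Finset (ℤ × ℤ)) :
    6 * #W ≤ (∑ i, #(W.image (rowInd i))) ^ 2 := by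
  rcases W.eq_empty_or_nonempty with rfl | hW
  · simp
  have hpos (i : Fin 3) : 0 < #(W.image (rowInd i)) := card_pos.mpr (hW.image _)
  have h := six_mul_card_sumTriples_add_parity_le (-W.image (rowInd 0)) (W.image (rowInd 1))
    (W.image (rowInd 2)) (T := {-1, 0}) card_le_two (by have := hpos 1; have := hpos 2; omega)
  rw [card_neg] at h
  rw [Fin.sum_univ_three]
  have := card_le_card_sumTriples_rowInd W
  omega

/-- The vertex with parameter `p` on the direction-`i` row of index `k`: the inverse of
`v ↦ (rowInd i v, rowParam i v)`. -/
def rowVertex : Fin 3 → ℤ → ℤ → ℤ × ℤ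
  | 0, k, p => (p, k)
  | 1, k, p => (p - (k + (p + 1) / 2), k + (p + 1) / 2)
  | 2, k, p => (k + (p + 1) / 2, k + (p + 1) / 2 - p)

lemma rowInd_rowVertex (i : Fin 3) (k p : ℤ) : rowInd i (rowVertex i k p) = k := by
  fin_cases i
  · rfl
  · exact (rowInd_one _).trans (by dsimp only [rowVertex]; omega)
  · exact (rowInd_two _).trans (by dsimp only [rowVertex]; omega)

lemma rowParam_rowVertex (i : Fin 3) (k p : ℤ) : rowParam i (rowVertex i k p) = p := by
  fin_cases i <;> simp [rowParam, rowVertex]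

lemma rowVertex_rowInd_rowParam (i : Fin 3) (v : ℤ × ℤ) :
    rowVertex i (rowInd i v) (rowParam i v) = v := by
  fin_cases i
  · rfl
  · ext <;> simp only [Fin.mk_one, rowInd_one, rowParam, rowVertex] <;> omega
  · ext <;> simp only [Fin.reduceFinMk, rowInd_two, rowParam, rowVertex] <;> omega

lemma hexAdj_rowVertex (i : Fin 3) (k : ℤ) {p q : ℤ} (hpq : p = q + 1 ∨ p = q - 1) :
    hexAdj (rowVertex i k p) (rowVertex i k q) := by
  fin_cases i <;> rcases hpq with rfl | rfl <;>
    simp only [hexAdj, rowVertex, Int.even_iff] <;> grind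

lemma rowParam_image_row (W : Set (ℤ × ℤ)) (i : Fin 3) (k : ℤ) :
    rowParam i '' {w ∈ W | rowInd i w = k} = {p | rowVertex i k p ∈ W} := by
  ext p
  constructor
  · rintro ⟨w, ⟨hw, rfl⟩, rfl⟩
    rwa [Set.mem_ofPred_eq, rowVertex_rowInd_rowParam]
  · exact fun hp ↦ ⟨rowVertex i k p, ⟨hp, rowInd_rowVertex i k p⟩, rowParam_rowVertex i k p⟩

end Rows

section OutermostNeighbors

variable {W : Set (ℤ × ℤ)} {i : Fin 3}

lemma isOutermostNeighbor_rowVertex_iff {k p : ℤ} :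
    IsOutermostNeighbor W i (rowVertex i k p) ↔
      IsLeast {q | rowVertex i k q ∈ W} (p + 1) ∨ IsGreatest {q | rowVertex i k q ∈ W} (p - 1) := by
  rw [IsOutermostNeighbor, rowInd_rowVertex, rowParam_rowVertex, rowParam_image_row]
  rfl

lemma IsOutermostNeighbor.xor_mem {u v w : ℤ × ℤ} (h : IsOutermostNeighbor W i v)
    (hu : rowInd i u = rowInd i v) (hu' : rowParam i u = rowParam i v + 1)
    (hw : rowInd i w = rowInd i v) (hw' : rowParam i w = rowParam i v - 1) :
    Xor (u ∈ W) (w ∈ W) := by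
  rw [← rowVertex_rowInd_rowParam i u, ← rowVertex_rowInd_rowParam i w, hu, hu', hw, hw']
  rw [← rowVertex_rowInd_rowParam i v, isOutermostNeighbor_rowVertex_iff] at h
  rcases h with ⟨hmem, hle⟩ | ⟨hmem, hle⟩
  · exact Or.inl ⟨hmem, fun h' ↦ absurd (hle h') (by omega)⟩
  · exact Or.inr ⟨hmem, fun h' ↦ absurd (hle h') (by omega)⟩

lemma IsOutermostNeighbor.mem_hexNbhd {v : ℤ × ℤ} (h : IsOutermostNeighbor W i v) :
    v ∈ hexNbhd W := by
  rw [← rowVertex_rowInd_rowParam i v] at h ⊢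
  rcases isOutermostNeighbor_rowVertex_iff.mp h with ⟨hmem, hle⟩ | ⟨hmem, hle⟩
  · exact ⟨fun hv ↦ absurd (hle hv) (by omega), _, hmem, hexAdj_rowVertex i _ (by omega)⟩
  · exact ⟨fun hv ↦ absurd (hle hv) (by omega), _, hmem, hexAdj_rowVertex i _ (by omega)⟩

lemma IsOutermostNeighbor.rowInd_mem_image {v : ℤ × ℤ} (h : IsOutermostNeighbor W i v) :
    rowInd i v ∈ rowInd i '' W := by
  rcases h with ⟨⟨w, ⟨hw, hwv⟩, -⟩, -⟩ | ⟨⟨w, ⟨hw, hwv⟩, -⟩, -⟩ <;> exact ⟨w, hw, hwv⟩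

lemma exists_ne_isOutermostNeighbor (hW : W.Finite) {k : ℤ} (hk : k ∈ rowInd i '' W) :
    ∃ u v, u ≠ v ∧ (IsOutermostNeighbor W i u ∧ rowInd i u = k) ∧
      IsOutermostNeighbor W i v ∧ rowInd i v = k := by
  set S : Set ℤ := {q | rowVertex i k q ∈ W} with hS
  have hfin : S.Finite := by
    rw [hS, ← rowParam_image_row]
    exact (hW.subset (Set.sep_subset _ _)).image _
  have hne : S.Nonempty := by
    obtain ⟨w, hw, rfl⟩ := hk
    exact ⟨rowParam i w, by rwa [hS, Set.mem_ofPred_eq, rowVertex_rowInd_rowParam]⟩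
  obtain ⟨m, hm⟩ := hfin.bddBelow.exists_isLeast_of_nonempty hne
  obtain ⟨M, hM⟩ := hfin.bddAbove.exists_isGreatest_of_nonempty hne
  refine ⟨rowVertex i k (m - 1), rowVertex i k (M + 1), fun h ↦ ?_,
    ⟨isOutermostNeighbor_rowVertex_iff.mpr (Or.inl ?_), rowInd_rowVertex _ _ _⟩,
    isOutermostNeighbor_rowVertex_iff.mpr (Or.inr ?_), rowInd_rowVertex _ _ _⟩
  · have hparam := congrArg (rowParam i) h
    rw [rowParam_rowVertex, rowParam_rowVertex] at hparam
    have := hm.2 hM.1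
    omega
  · rwa [sub_add_cancel]
  · rwa [add_sub_cancel_right]

lemma exists_not_isOutermostNeighbor (W : Set (ℤ × ℤ)) (v : ℤ × ℤ) :
    ∃ i, ¬ IsOutermostNeighbor W i v := by
  by_contra! h
  obtain ⟨x, y⟩ := v
  have hright_left : Xor ((x + 1, y) ∈ W) ((x - 1, y) ∈ W) := (h 0).xor_mem rfl rfl rfl rfl
  rcases Int.even_or_odd' (x + y) with ⟨a, ha | ha⟩
  · have hup_left : Xor ((x, y + 1) ∈ W) ((x - 1, y) ∈ W) := by
      refine (h 1).xor_mem ?_ ?_ ?_ ?_ <;> simp only [rowInd_one, rowParam] <;> omega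
    have hright_up : Xor ((x + 1, y) ∈ W) ((x, y + 1) ∈ W) := by
      refine (h 2).xor_mem ?_ ?_ ?_ ?_ <;> simp only [rowInd_two, rowParam] <;> omega
    grind
  · have hright_down : Xor ((x + 1, y) ∈ W) ((x, y - 1) ∈ W) := by
      refine (h 1).xor_mem ?_ ?_ ?_ ?_ <;> simp only [rowInd_one, rowParam] <;> omega
    have hdown_left : Xor ((x, y - 1) ∈ W) ((x - 1, y) ∈ W) := by
      refine (h 2).xor_mem ?_ ?_ ?_ ?_ <;> simp only [rowInd_two, rowParam] <;> omega
    grind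

lemma finite_hexNbhd (hW : W.Finite) : (hexNbhd W).Finite := by
  refine (hW.biUnion fun w _ ↦ Set.finite_Icc (w - 1) (w + 1)).subset ?_
  rintro v ⟨-, w, hw, hvw⟩
  refine Set.mem_biUnion hw ?_
  simp only [hexAdj] at hvw
  simp only [Set.mem_Icc, Prod.le_def, Prod.fst_sub, Prod.snd_sub, Prod.fst_add, Prod.snd_add,
    Prod.fst_one, Prod.snd_one]
  omega

open scoped Classical in
lemma two_mul_card_rows_le (W N : Finset (ℤ × ℤ)) (hN : hexNbhd W ⊆ N) (i : Fin 3) :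
    2 * #(W.image (rowInd i)) ≤ #{v ∈ N | IsOutermostNeighbor W i v} := by
  refine mul_card_image_le_card_of_maps_to (f := rowInd i) (fun v hv ↦ ?_) 2 (fun k hk ↦ ?_)
  · exact_mod_cast (mem_filter.mp hv).2.rowInd_mem_image
  · obtain ⟨u, v, huv, ⟨hu, huk⟩, hv, hvk⟩ :=
      exists_ne_isOutermostNeighbor W.finite_toSet (i := i) (k := k) (by exact_mod_cast hk)
    exact one_lt_card.mpr ⟨u, by simp [hu, huk, mem_coe.mp (hN hu.mem_hexNbhd)],
      v, by simp [hv, hvk, mem_coe.mp (hN hv.mem_hexNbhd)], huv⟩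

open scoped Classical in
lemma card_outermost_directions_le_two (W : Set (ℤ × ℤ)) (v : ℤ × ℤ) :
    #{i | IsOutermostNeighbor W i v} ≤ 2 := by
  obtain ⟨i, hi⟩ := exists_not_isOutermostNeighbor W v
  exact Nat.le_of_lt_succ (card_lt_card (filter_ssubset.mpr ⟨i, mem_univ i, hi⟩))

theorem sum_card_rows_le_ncard_hexNbhd (W : Finset (ℤ × ℤ)) :
    ∑ i, #(W.image (rowInd i)) ≤ (hexNbhd W).ncard := by
  classical
  have hfin := finite_hexNbhd W.finite_toSet
  rw [Set.ncard_eq_toFinset_card _ hfin]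
  set N := hfin.toFinset
  have hdouble : 2 * ∑ i, #(W.image (rowInd i)) ≤ #N * 2 :=
    calc 2 * ∑ i, #(W.image (rowInd i))
        = ∑ i, 2 * #(W.image (rowInd i)) := mul_sum _ _ _
      _ ≤ ∑ i, #{v ∈ N | IsOutermostNeighbor W i v} :=
        sum_le_sum fun i _ ↦ two_mul_card_rows_le W N hfin.coe_toFinset.ge i
      _ = ∑ v ∈ N, #{i | IsOutermostNeighbor W i v} :=
        sum_card_bipartiteAbove_eq_sum_card_bipartiteBelow _
      _ ≤ #N * 2 := sum_le_card_nsmul _ _ _ fun v _ ↦ card_outermost_directions_le_two W v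
  omega

end OutermostNeighbors

/-- For every finite subset `W` of the vertices of the infinite hexagonal grid,
`|𝒩(W)| ≥ √6 · √|W|`. -/
theorem infinite_hex_neighbor_isoperimetric (W : Set (ℤ × ℤ)) (hW : W.Finite) :
    Real.sqrt 6 * Real.sqrt W.ncard ≤ ((hexNbhd W).ncard : ℝ) := by
  lift W to Finset (ℤ × ℤ) using hW
  have hcard : 6 * #W ≤ (hexNbhd W).ncard ^ 2 :=
    (six_mul_card_le_sq_sum_card_rows W).trans
      (Nat.pow_le_pow_left (sum_card_rows_le_ncard_hexNbhd W) 2)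
  rw [Set.ncard_coe_finset, ← Real.sqrt_mul (by norm_num)]
  exact Real.sqrt_le_iff.mpr ⟨Nat.cast_nonneg _, by exact_mod_cast hcard⟩
end

section
/- The constant √6 is optimal in the neighbor-isoperimetric inequality on the infinite hexagonal grid: if c is a real number such that |𝒩(W)| ≥ c · √|W| holds for every finite nonempty subset W of the vertices of G∞, then c ≤ √6. -/
/-!
A single cell attains equality in `√6 · √|W| ≤ |𝒩(W)|`: a hexagon has `6` vertices, and its
neighbors are the `6` distinct outer endpoints of the edges leaving them.
-/

theorem hexCell_eq_prod (a b : ℤ) :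
    hexCell a b = Set.Icc (2 * a + b) (2 * a + b + 2) ×ˢ Set.Icc b (b + 1) := by
  ext ⟨x, y⟩
  simp only [hexCell, Set.mem_insert_iff, Set.mem_singleton_iff, Prod.mk.injEq, Set.mem_prod,
    Set.mem_Icc]
  omega

theorem finite_hexCell (a b : ℤ) : (hexCell a b).Finite := by
  rw [hexCell_eq_prod]
  exact (Set.finite_Icc _ _).prod (Set.finite_Icc _ _)

theorem nonempty_hexCell (a b : ℤ) : (hexCell a b).Nonempty :=
  Set.insert_nonempty _ _

theorem ncard_hexCell (a b : ℤ) : (hexCell a b).ncard = 6 := by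
  rw [hexCell_eq_prod, Set.ncard_prod, ← Finset.coe_Icc, ← Finset.coe_Icc]
  simp only [Set.ncard_coe_finset, Int.card_Icc]
  have hwidth : (2 * a + b + 2 + 1 - (2 * a + b)).toNat = 3 := by omega
  have hheight : (b + 1 + 1 - b).toNat = 2 := by omega
  rw [hwidth, hheight]

theorem hexNbhd_hexCell (a b : ℤ) :
    hexNbhd (hexCell a b) =
      {2 * a + b - 1, 2 * a + b + 3} ×ˢ {b, b + 1} ∪ {2 * a + b + 1} ×ˢ {b - 1, b + 2} := by
  ext ⟨x, y⟩
  simp only [hexNbhd, hexAdj, hexCell_eq_prod, Int.even_iff, Set.mem_ofPred_eq, Set.mem_prod,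
    Set.mem_Icc, Set.mem_union, Set.mem_insert_iff, Set.mem_singleton_iff, Prod.exists]
  constructor
  · rintro ⟨hv, x', y', hw, hadj⟩
    omega
  · rintro (⟨rfl | rfl, rfl | rfl⟩ | ⟨rfl, rfl | rfl⟩)
    · exact ⟨by omega, 2 * a + y, y, by omega⟩
    · exact ⟨by omega, 2 * a + b, b + 1, by omega⟩
    · exact ⟨by omega, 2 * a + y + 2, y, by omega⟩
    · exact ⟨by omega, 2 * a + b + 2, b + 1, by omega⟩
    · exact ⟨by omega, 2 * a + b + 1, b, by omega⟩
    · exact ⟨by omega, 2 * a + b + 1, b + 1, by omega⟩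

theorem ncard_hexNbhd_hexCell (a b : ℤ) : (hexNbhd (hexCell a b)).ncard = 6 := by
  have hdisj : Disjoint (({2 * a + b - 1, 2 * a + b + 3} : Set ℤ) ×ˢ ({b, b + 1} : Set ℤ))
      (({2 * a + b + 1} : Set ℤ) ×ˢ ({b - 1, b + 2} : Set ℤ)) :=
    Set.disjoint_prod.2 <| .inl <| Set.disjoint_singleton_right.2 <| by
      simp only [Set.mem_insert_iff, Set.mem_singleton_iff]
      omega
  rw [hexNbhd_hexCell, Set.ncard_union_eq hdisj (Set.toFinite _) (Set.toFinite _),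
    Set.ncard_prod, Set.ncard_prod, Set.ncard_singleton, Set.ncard_pair (by omega),
    Set.ncard_pair (by omega), Set.ncard_pair (by omega)]

theorem ncard_hexNbhd_hexCell_eq_sqrt_mul_sqrt (a b : ℤ) :
    ((hexNbhd (hexCell a b)).ncard : ℝ) = Real.sqrt 6 * Real.sqrt (hexCell a b).ncard := by
  rw [ncard_hexNbhd_hexCell, ncard_hexCell, Nat.cast_ofNat, Real.mul_self_sqrt (by norm_num)]

/-- The constant `√6` is optimal in the neighbor-isoperimetric inequality on the
infinite hexagonal grid. -/
theorem infinite_hex_neighbor_constant_optimal (c : ℝ)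
    (h : ∀ W : Set (ℤ × ℤ), W.Finite → W.Nonempty →
      c * Real.sqrt W.ncard ≤ ((hexNbhd W).ncard : ℝ)) :
    c ≤ Real.sqrt 6 := by
  have hpos : 0 < Real.sqrt (hexCell 0 0).ncard := by
    rw [ncard_hexCell]
    positivity
  refine le_of_mul_le_mul_right ?_ hpos
  rw [← ncard_hexNbhd_hexCell_eq_sqrt_mul_sqrt]
  exact h _ (finite_hexCell 0 0) (nonempty_hexCell 0 0)
end

section
/- For every finite subset W of the vertices of the infinite hexagonal grid G∞, the number of boundary vertices satisfies |ℬ(W)| ≥ √6 · √(|W| + 3/2) − 3 (this is the inequality |ℬ(W)| ≥ c·√(|W| + c²/4) − c²/2 with c = √6). -/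
/-!
The rows in the three directions of the honeycomb serve as coordinates. Let `a, b, c` be the
numbers of rows met by a finite set `I` in the three directions, and let `B` contain all outer
neighbors of `I`.

* Each row met by `I` is left by `I` at both ends, through a vertex of `B` having exactly one of its
  two neighbors on that row in `I`. Since two of the three neighbors of a vertex are on the same
  side of `I`, every vertex of `B` plays this role in at most two directions, so `a + b + c ≤ |B|`.
* Within each of the two color classes of this bipartite graph, a vertex is determined by two of its
  row indices, whose sum is the third one up to a constant. Given sets of `a`, `b` and `c` integers,
  at most `t c + (a - t) (b - t)` pairs from the first two have their sum in the third, and choosing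
  `t` near `(a + b - c) / 2` yields `6 |I| ≤ (a + b + c) ^ 2`.

With `I = W \ ℬ(W)` and `B = ℬ(W)` this gives `6 (|W| - |ℬ(W)|) ≤ |ℬ(W)| ^ 2`, which is the claim
after completing the square.
-/

namespace HexGrid

open Finset

theorem image_ne_self_of_forall_lt {α : Type*} [LinearOrder α] {S : Finset α} {f : α → α}
    (hS : S.Nonempty) (hf : ∀ x, f x < x) : S.image f ≠ S := by
  intro h
  have hmem : f (S.min' hS) ∈ S.image f := mem_image_of_mem f (S.min'_mem hS)
  rw [h] at hmem
  exact (hf _).not_ge (S.min'_le _ hmem)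

section SumPairs

variable {G : Type*} [Add G] [DecidableEq G] {P Q S T : Finset G}

/-- The pairs in `P × Q` whose sum lies in `S`. They encode vertices of one color class of the
honeycomb when `P` and `Q` index rows of two directions and `S` is a translate of the index set of
rows of the third. -/
def sumPairs (P Q S : Finset G) : Finset (G × G) :=
  {z ∈ P ×ˢ Q | z.1 + z.2 ∈ S}

theorem mem_sumPairs {z : G × G} : z ∈ sumPairs P Q S ↔ (z.1 ∈ P ∧ z.2 ∈ Q) ∧ z.1 + z.2 ∈ S := by
  simp [sumPairs]

theorem card_sumPairs_insert (P Q : Finset G) {x : G} (hx : x ∉ S) :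
    #(sumPairs P Q (insert x S)) = #(sumPairs P Q {x}) + #(sumPairs P Q S) := by
  have hunion : sumPairs P Q (insert x S) = sumPairs P Q {x} ∪ sumPairs P Q S := by
    ext z
    simp only [mem_union, mem_sumPairs, mem_insert, mem_singleton]
    tauto
  rw [hunion, card_union_of_disjoint]
  refine disjoint_left.2 fun z hz hzS => hx ?_
  rw [← mem_singleton.1 (mem_sumPairs.1 hz).2]
  exact (mem_sumPairs.1 hzS).2

theorem card_sumPairs_insert_add_card_sumPairs_erase (P Q : Finset G) {x : G} (hS : x ∉ S)
    (hT : x ∈ T) :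
    #(sumPairs P Q (insert x S)) + #(sumPairs P Q (T.erase x)) =
      #(sumPairs P Q S) + #(sumPairs P Q T) := by
  have hT_eq := card_sumPairs_insert P Q (notMem_erase x T)
  rw [insert_erase hT] at hT_eq
  rw [card_sumPairs_insert P Q hS, hT_eq]
  ring

end SumPairs

section OrderedSumPairs

variable {G : Type*} [Add G] [LinearOrder G] [AddLeftStrictMono G] [AddRightStrictMono G]
  {P Q S T : Finset G}

theorem card_sumPairs_le_erase_add (S : Finset G) {p₀ q₀ : G} (hp₀ : ∀ p ∈ P, p₀ ≤ p)
    (hq₀ : ∀ q ∈ Q, q ≤ q₀) :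
    #(sumPairs P Q S) ≤ #(sumPairs (P.erase p₀) (Q.erase q₀) S) + #S := by
  set hook := {z ∈ sumPairs P Q S | z.1 = p₀ ∨ z.2 = q₀} with hhook
  have hcover : sumPairs P Q S ⊆ sumPairs (P.erase p₀) (Q.erase q₀) S ∪ hook := by
    intro z
    simp only [hhook, mem_union, mem_filter, mem_sumPairs, mem_erase]
    tauto
  -- The sums increase strictly along the hook, from `p₀ + min Q` through `p₀ + q₀` to `max P + q₀`.
  have hcard : #hook ≤ #S := by
    refine card_le_card_of_injOn (fun z => z.1 + z.2)
      (fun z hz => (mem_sumPairs.1 (mem_filter.1 hz).1).2) ?_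
    rintro ⟨p, q⟩ hz ⟨p', q'⟩ hz' (hsum : p + q = p' + q')
    obtain ⟨⟨⟨hp : p ∈ P, hq : q ∈ Q⟩, -⟩, h : p = p₀ ∨ q = q₀⟩ := by
      simpa only [hhook, mem_coe, mem_filter, mem_sumPairs] using hz
    obtain ⟨⟨⟨hp' : p' ∈ P, hq' : q' ∈ Q⟩, -⟩, h' : p' = p₀ ∨ q' = q₀⟩ := by
      simpa only [hhook, mem_coe, mem_filter, mem_sumPairs] using hz'
    rw [Prod.mk.injEq]
    rcases h with rfl | rfl <;> rcases h' with rfl | rfl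
    · exact ⟨rfl, add_right_strictMono.injective hsum⟩
    · exact (add_eq_add_iff_eq_and_eq (hp₀ _ hp') (hq₀ _ hq)).1 hsum
    · exact ((add_eq_add_iff_eq_and_eq (hp₀ _ hp) (hq₀ _ hq')).1 hsum.symm).imp Eq.symm Eq.symm
    · exact ⟨add_left_strictMono.injective hsum, rfl⟩
  calc #(sumPairs P Q S) ≤ #(sumPairs (P.erase p₀) (Q.erase q₀) S ∪ hook) := card_le_card hcover
    _ ≤ #(sumPairs (P.erase p₀) (Q.erase q₀) S) + #hook := card_union_le _ _
    _ ≤ #(sumPairs (P.erase p₀) (Q.erase q₀) S) + #S := by gcongr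

theorem card_sumPairs_le (S : Finset G) {t : ℕ} (hP : t ≤ #P) (hQ : t ≤ #Q) :
    (#(sumPairs P Q S) : ℤ) ≤ t * #S + (#P - t) * (#Q - t) := by
  induction t generalizing P Q with
  | zero =>
    have hpairs : #(sumPairs P Q S) ≤ #P * #Q := (card_filter_le _ _).trans_eq (card_product P Q)
    zify at hpairs
    push_cast
    linarith
  | succ t ih =>
    obtain ⟨hmin, hmin_le⟩ := P.isLeast_min' (card_pos.1 (by lia))
    obtain ⟨hmax, hle_max⟩ := Q.isGreatest_max' (card_pos.1 (by lia))
    have hpeel := card_sumPairs_le_erase_add S hmin_le hle_max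
    have hrest := ih (P := P.erase _) (Q := Q.erase _)
      (by rw [card_erase_of_mem hmin]; lia) (by rw [card_erase_of_mem hmax]; lia)
    rw [cast_card_erase_of_mem hmin, cast_card_erase_of_mem hmax] at hrest
    zify at hpeel
    push_cast
    linarith

theorem two_mul_card_sumPairs_add_le (hST : S ≠ T) (hcard : #S = #T) (hS_le : #S ≤ #P + #Q)
    (hP_le : #P ≤ #Q + #S) (hQ_le : #Q ≤ #P + #S) :
    2 * (#(sumPairs P Q S) + #(sumPairs P Q T) : ℤ) ≤ 4 * #P * #Q - (#P + #Q - #S) ^ 2 := by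
  obtain ⟨t, ht | ht⟩ : ∃ t, #P + #Q = #S + 2 * t ∨ #P + #Q = #S + 2 * t + 1 :=
    ⟨(#P + #Q - #S) / 2, by lia⟩
  · have hS := card_sumPairs_le (P := P) (Q := Q) S (t := t) (by lia) (by lia)
    have hT := card_sumPairs_le (P := P) (Q := Q) T (t := t) (by lia) (by lia)
    rw [← hcard] at hT
    have hc : (#S : ℤ) = #P + #Q - 2 * t := by lia
    rw [hc] at hS hT ⊢
    linarith
  -- Here the optimal `t` is a half-integer. Moving an element from `T` to `S` makes it an integer
  -- for both sets, and the bound with optimal `t` is concave in the size, so nothing is lost.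
  · obtain ⟨x, hxT, hxS⟩ : ∃ x ∈ T, x ∉ S :=
      not_subset.1 fun h => hST (eq_of_subset_of_card_le h hcard.le).symm
    have hS := card_sumPairs_le (P := P) (Q := Q) (insert x S) (t := t) (by lia) (by lia)
    have hT := card_sumPairs_le (P := P) (Q := Q) (T.erase x) (t := t + 1) (by lia) (by lia)
    have hmove : (#(sumPairs P Q (insert x S)) + #(sumPairs P Q (T.erase x)) : ℤ) =
        #(sumPairs P Q S) + #(sumPairs P Q T) :=
      mod_cast card_sumPairs_insert_add_card_sumPairs_erase P Q hxS hxT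
    rw [card_insert_of_notMem hxS] at hS
    rw [cast_card_erase_of_mem hxT, ← hcard] at hT
    have hc : (#S : ℤ) = #P + #Q - (2 * t + 1) := by lia
    push_cast at hS hT
    rw [hc] at hS hT ⊢
    linarith

theorem six_mul_card_sumPairs_add_le_sq (P Q : Finset G) (hST : S ≠ T) (hcard : #S = #T) :
    6 * (#(sumPairs P Q S) + #(sumPairs P Q T) : ℤ) ≤ (#P + #Q + #S) ^ 2 := by
  have hbound {t : ℕ} (hP : t ≤ #P) (hQ : t ≤ #Q) :
      (#(sumPairs P Q S) + #(sumPairs P Q T) : ℤ) ≤ 2 * (t * #S + (#P - t) * (#Q - t)) := by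
    have hS := card_sumPairs_le S hP hQ
    have hT := card_sumPairs_le T hP hQ
    rw [← hcard] at hT
    linarith
  have hdegenerate {x y z : ℕ} (h : x + y < z) : (12 * (x * y) : ℤ) ≤ (x + y + z) ^ 2 := by
    zify at h
    nlinarith [sq_nonneg ((x : ℤ) - y)]
  rcases lt_or_ge (#P + #Q) #S with hS | hS
  · have hzero := hbound (Nat.zero_le #P) (Nat.zero_le #Q)
    rw [Nat.cast_zero] at hzero
    linarith [hdegenerate hS]
  rcases lt_or_ge (#Q + #S) #P with hP | hP
  · linarith [hbound (t := #Q) (by lia) le_rfl, hdegenerate hP]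
  rcases lt_or_ge (#P + #S) #Q with hQ | hQ
  · linarith [hbound (t := #P) le_rfl (by lia), hdegenerate hQ]
  have htriangle := two_mul_card_sumPairs_add_le hST hcard hS hP hQ
  linarith [sq_nonneg (#P - #Q : ℤ), sq_nonneg (#Q - #S : ℤ), sq_nonneg (#P - #S : ℤ)]

end OrderedSumPairs

section Orbits

variable {V R α : Type*} [DecidableEq V] [DecidableEq R] [LinearOrder α] {I B : Finset V}
  {σ : Equiv.Perm V} {ρ : V → R} {π : V → α}

theorem card_image_le_card_exits (hρ : ∀ v, ρ (σ v) = ρ v) (hπ : ∀ v, π v < π (σ v))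
    (hB : ∀ v ∈ I, σ v ∉ I → σ v ∈ B) :
    #(I.image ρ) ≤ #{v ∈ B | σ v ∉ I ∧ σ.symm v ∈ I} := by
  refine (card_le_card fun r hr => ?_).trans (card_image_le (f := ρ))
  obtain ⟨v, hv, rfl⟩ := mem_image.1 hr
  obtain ⟨last, hlast, hmax⟩ := exists_max_image {w ∈ I | ρ w = ρ v} π ⟨v, by simp [hv]⟩
  obtain ⟨hlastI, hlastρ⟩ := mem_filter.1 hlast
  have hbeyond {u : V} (hu : ρ u = ρ v) (hlt : π last < π u) : u ∉ I := fun huI =>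
    (hmax u (mem_filter.2 ⟨huI, hu⟩)).not_gt hlt
  have hnext : σ last ∉ I := hbeyond (by rw [hρ, hlastρ]) (hπ last)
  have hnext₂ : σ (σ last) ∉ I :=
    hbeyond (by rw [hρ, hρ, hlastρ]) ((hπ last).trans (hπ (σ last)))
  refine mem_image.2 ⟨σ last, mem_filter.2 ⟨hB last hlastI hnext, hnext₂, ?_⟩, ?_⟩
  · rwa [σ.symm_apply_apply]
  · rw [hρ, hlastρ]

theorem two_mul_card_image_le_card_exits (hρ : ∀ v, ρ (σ v) = ρ v) (hπ : ∀ v, π v < π (σ v))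
    (hB : ∀ v ∈ I, σ v ∉ I → σ v ∈ B) (hB_symm : ∀ v ∈ I, σ.symm v ∉ I → σ.symm v ∈ B) :
    2 * #(I.image ρ) ≤ #{v ∈ B | ¬(σ v ∈ I ↔ σ.symm v ∈ I)} := by
  have hforward := card_image_le_card_exits hρ hπ hB
  have hbackward : #(I.image ρ) ≤ #{v ∈ B | σ.symm v ∉ I ∧ σ v ∈ I} :=
    card_image_le_card_exits (σ := σ.symm) (π := OrderDual.toDual ∘ π)
      (fun v => by rw [← hρ, σ.apply_symm_apply])
      (fun v => by simpa using hπ (σ.symm v)) hB_symm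
  have hdisj : Disjoint {v ∈ B | σ v ∉ I ∧ σ.symm v ∈ I} {v ∈ B | σ.symm v ∉ I ∧ σ v ∈ I} :=
    disjoint_filter.2 fun v _ h h' => h.1 h'.2
  calc 2 * #(I.image ρ)
      ≤ #{v ∈ B | σ v ∉ I ∧ σ.symm v ∈ I} + #{v ∈ B | σ.symm v ∉ I ∧ σ v ∈ I} := by lia
    _ = #({v ∈ B | σ v ∉ I ∧ σ.symm v ∈ I} ∪ {v ∈ B | σ.symm v ∉ I ∧ σ v ∈ I}) :=
      (card_union_of_disjoint hdisj).symm
    _ ≤ #{v ∈ B | ¬(σ v ∈ I ↔ σ.symm v ∈ I)} := by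
      rw [← filter_or]
      exact card_le_card (monotone_filter_right B fun v _ h => by tauto)

end Orbits

section Rows

/-- The step to the next vertex along the rows of direction `i`, in the sense of increasing
`rowParam i`, as a permutation of the vertices. Rows of direction `1` and `2` alternate between
horizontal and vertical edges, hence the parity test. -/
def rowNext : Fin 3 → Equiv.Perm (ℤ × ℤ)
  | 0 =>
    { toFun := fun v => (v.1 + 1, v.2)
      invFun := fun v => (v.1 - 1, v.2)
      left_inv := fun v => by simp
      right_inv := fun v => by simp }
  | 1 =>
    { toFun := fun v => if Even (v.1 + v.2) then (v.1, v.2 + 1) else (v.1 + 1, v.2)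
      invFun := fun v => if Even (v.1 + v.2) then (v.1 - 1, v.2) else (v.1, v.2 - 1)
      left_inv := fun v => by grind
      right_inv := fun v => by grind }
  | 2 =>
    { toFun := fun v => if Even (v.1 + v.2) then (v.1 + 1, v.2) else (v.1, v.2 - 1)
      invFun := fun v => if Even (v.1 + v.2) then (v.1, v.2 + 1) else (v.1 - 1, v.2)
      left_inv := fun v => by grind
      right_inv := fun v => by grind }

theorem rowInd_one (v : ℤ × ℤ) : rowInd 1 v = (v.2 - v.1) / 2 :=
  Int.fdiv_eq_ediv_of_nonneg _ zero_le_two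

theorem rowInd_two (v : ℤ × ℤ) : rowInd 2 v = (v.1 + v.2) / 2 :=
  Int.fdiv_eq_ediv_of_nonneg _ zero_le_two

theorem rowInd_one_add_rowInd_two (v : ℤ × ℤ) :
    rowInd 1 v + rowInd 2 v = if Even (v.1 + v.2) then rowInd 0 v else rowInd 0 v - 1 := by
  rw [rowInd_one, rowInd_two]
  dsimp only [rowInd]
  grind

theorem eq_of_rowInd_eq {v w : ℤ × ℤ} (hcolor : Even (v.1 + v.2) ↔ Even (w.1 + w.2))
    (h₁ : rowInd 1 v = rowInd 1 w) (h₂ : rowInd 2 v = rowInd 2 w) : v = w := by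
  rw [rowInd_one, rowInd_one] at h₁
  rw [rowInd_two, rowInd_two] at h₂
  grind

theorem rowInd_rowNext (i : Fin 3) (v : ℤ × ℤ) : rowInd i (rowNext i v) = rowInd i v := by
  match i with
  | 0 => rfl
  | 1 => rw [rowInd_one, rowInd_one]; dsimp [rowNext]; grind
  | 2 => rw [rowInd_two, rowInd_two]; dsimp [rowNext]; grind

theorem rowParam_rowNext (i : Fin 3) (v : ℤ × ℤ) :
    rowParam i (rowNext i v) = rowParam i v + 1 := by
  fin_cases i <;> dsimp [rowNext, rowParam] <;> grind

theorem hexAdj_comm {v w : ℤ × ℤ} : hexAdj v w ↔ hexAdj w v := by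
  unfold hexAdj
  grind

theorem hexAdj_rowNext (i : Fin 3) (v : ℤ × ℤ) : hexAdj v (rowNext i v) := by
  fin_cases i <;> dsimp [rowNext, hexAdj] <;> grind

theorem hexAdj_rowNext_symm (i : Fin 3) (v : ℤ × ℤ) : hexAdj v ((rowNext i).symm v) := by
  simpa [hexAdj_comm] using hexAdj_rowNext i ((rowNext i).symm v)

theorem exists_rowNext_mem_iff_symm_mem (I : Set (ℤ × ℤ)) (v : ℤ × ℤ) :
    ∃ i, rowNext i v ∈ I ↔ (rowNext i).symm v ∈ I := by
  by_contra! hne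
  have h₀ := hne 0
  have h₁ := hne 1
  have h₂ := hne 2
  by_cases hv : Even (v.1 + v.2) <;>
    simp only [rowNext, Equiv.coe_fn_mk, Equiv.coe_fn_symm_mk, hv, if_true, if_false]
      at h₀ h₁ h₂ <;>
    tauto

end Rows

section Isoperimetry

variable {I B : Finset (ℤ × ℤ)}

theorem two_mul_card_image_rowInd_le (hB : hexNbhd I ⊆ B) (i : Fin 3) :
    2 * #(I.image (rowInd i)) ≤
      #{v ∈ B | ¬(rowNext i v ∈ I ↔ (rowNext i).symm v ∈ I)} := by
  have hmem {v w : ℤ × ℤ} (hv : v ∈ I) (hvw : hexAdj v w) (hw : w ∉ I) : w ∈ B :=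
    hB ⟨hw, v, hv, hexAdj_comm.1 hvw⟩
  have hlt (v : ℤ × ℤ) : rowParam i v < rowParam i (rowNext i v) := by
    rw [rowParam_rowNext]
    exact lt_add_one _
  exact two_mul_card_image_le_card_exits (rowInd_rowNext i) hlt
    (fun v hv => hmem hv (hexAdj_rowNext i v)) (fun v hv => hmem hv (hexAdj_rowNext_symm i v))

theorem sum_card_image_rowInd_le (hB : hexNbhd I ⊆ B) :
    ∑ i : Fin 3, #(I.image (rowInd i)) ≤ #B := by
  let IsExit (i : Fin 3) (v : ℤ × ℤ) : Prop := ¬(rowNext i v ∈ I ↔ (rowNext i).symm v ∈ I)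
  have hdirections (v : ℤ × ℤ) : #{i | IsExit i v} ≤ 2 := by
    obtain ⟨i, hi⟩ := exists_rowNext_mem_iff_symm_mem I v
    exact Nat.lt_succ_iff.1 (card_lt_univ_of_notMem (x := i) (by simpa [IsExit] using hi))
  have hdouble : 2 * ∑ i : Fin 3, #(I.image (rowInd i)) ≤ 2 * #B :=
    calc 2 * ∑ i : Fin 3, #(I.image (rowInd i))
        ≤ ∑ i : Fin 3, #{v ∈ B | IsExit i v} := by
          rw [mul_sum]
          exact sum_le_sum fun i _ => two_mul_card_image_rowInd_le hB i
      _ = ∑ v ∈ B, #{i | IsExit i v} := sum_card_bipartiteAbove_eq_sum_card_bipartiteBelow IsExit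
      _ ≤ 2 * #B := by
          rw [mul_comm]
          exact sum_le_card_nsmul B _ 2 fun v _ => hdirections v
  lia

theorem card_le_card_sumPairs_of_even_iff {J : Finset (ℤ × ℤ)} {S : Finset ℤ} (hJI : J ⊆ I)
    (hcolor : ∀ v ∈ J, ∀ w ∈ J, Even (v.1 + v.2) ↔ Even (w.1 + w.2))
    (hS : ∀ v ∈ J, rowInd 1 v + rowInd 2 v ∈ S) :
    #J ≤ #(sumPairs (I.image (rowInd 1)) (I.image (rowInd 2)) S) := by
  refine card_le_card_of_injOn (fun v => (rowInd 1 v, rowInd 2 v)) (fun v hv => ?_) ?_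
  · exact mem_sumPairs.2
      ⟨⟨mem_image_of_mem _ (hJI hv), mem_image_of_mem _ (hJI hv)⟩, hS v hv⟩
  · intro v hv w hw hvw
    exact eq_of_rowInd_eq (hcolor v hv w hw) (Prod.mk.inj hvw).1 (Prod.mk.inj hvw).2

theorem card_le_card_sumPairs_add (I : Finset (ℤ × ℤ)) :
    #I ≤ #(sumPairs (I.image (rowInd 1)) (I.image (rowInd 2)) (I.image (rowInd 0))) +
      #(sumPairs (I.image (rowInd 1)) (I.image (rowInd 2))
        ((I.image (rowInd 0)).image (· - 1))) := by
  rw [← card_filter_add_card_filter_not (s := I) fun v => Even (v.1 + v.2)]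
  refine Nat.add_le_add
    (card_le_card_sumPairs_of_even_iff (filter_subset _ _) (by grind) fun v hv => ?_)
    (card_le_card_sumPairs_of_even_iff (filter_subset _ _) (by grind) fun v hv => ?_)
  · obtain ⟨hvI, hv⟩ := mem_filter.1 hv
    rw [rowInd_one_add_rowInd_two, if_pos hv]
    exact mem_image_of_mem _ hvI
  · obtain ⟨hvI, hv⟩ := mem_filter.1 hv
    rw [rowInd_one_add_rowInd_two, if_neg hv]
    exact mem_image_of_mem _ (mem_image_of_mem _ hvI)

theorem six_mul_card_le_sq_sum_card_image_rowInd (I : Finset (ℤ × ℤ)) :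
    6 * #I ≤ (∑ i : Fin 3, #(I.image (rowInd i))) ^ 2 := by
  rcases I.eq_empty_or_nonempty with rfl | hI
  · simp
  have hpairs := card_le_card_sumPairs_add I
  have hsq := six_mul_card_sumPairs_add_le_sq (I.image (rowInd 1)) (I.image (rowInd 2))
    (image_ne_self_of_forall_lt (hI.image (rowInd 0)) sub_one_lt).symm
    (card_image_of_injective _ (sub_left_injective (b := 1))).symm
  rw [Fin.sum_univ_three]
  zify at hpairs ⊢
  linarith

theorem six_mul_card_le_sq_of_hexNbhd_subset (hB : hexNbhd I ⊆ B) : 6 * #I ≤ #B ^ 2 :=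
  (six_mul_card_le_sq_sum_card_image_rowInd I).trans
    (Nat.pow_le_pow_left (sum_card_image_rowInd_le hB) 2)

theorem hexBdry_subset (W : Set (ℤ × ℤ)) : hexBdry W ⊆ W := fun _ hv => hv.1

theorem hexNbhd_sdiff_hexBdry_subset (W : Set (ℤ × ℤ)) :
    hexNbhd (W \ hexBdry W) ⊆ hexBdry W := by
  rintro v ⟨hv, w, ⟨hwW, hwB⟩, hvw⟩
  have hvW : v ∈ W := by_contra fun hvW => hwB ⟨hwW, v, hvW, hexAdj_comm.1 hvw⟩
  exact by_contra fun hvB => hv ⟨hvW, hvB⟩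

theorem six_mul_ncard_le (W : Set (ℤ × ℤ)) (hW : W.Finite) :
    6 * W.ncard ≤ (hexBdry W).ncard ^ 2 + 6 * (hexBdry W).ncard := by
  have hsubset := hexBdry_subset W
  have hnbhd := hexNbhd_sdiff_hexBdry_subset W
  lift W to Finset (ℤ × ℤ) using hW
  obtain ⟨B, hB⟩ := (W.finite_toSet.subset hsubset).exists_finset_coe
  rw [← hB] at hsubset hnbhd ⊢
  rw [← coe_sdiff] at hnbhd
  have hinterior := six_mul_card_le_sq_of_hexNbhd_subset hnbhd
  have hcard := card_sdiff_add_card_eq_card (coe_subset.1 hsubset)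
  rw [Set.ncard_coe_finset, Set.ncard_coe_finset]
  lia

end Isoperimetry

end HexGrid

/-- For every finite subset `W` of the vertices of the infinite hexagonal grid,
`|ℬ(W)| ≥ √6 · √(|W| + 3/2) - 3`. -/
theorem infinite_hex_boundary_isoperimetric (W : Set (ℤ × ℤ)) (hW : W.Finite) :
    Real.sqrt 6 * Real.sqrt ((W.ncard : ℝ) + 3/2) - 3 ≤ ((hexBdry W).ncard : ℝ) := by
  have hcard : (6 * W.ncard : ℝ) ≤ (hexBdry W).ncard ^ 2 + 6 * (hexBdry W).ncard :=
    mod_cast HexGrid.six_mul_ncard_le W hW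
  rw [← Real.sqrt_mul (by norm_num), sub_le_iff_le_add]
  refine Real.sqrt_le_iff.2 ⟨by positivity, ?_⟩
  calc 6 * ((W.ncard : ℝ) + 3 / 2) = 6 * W.ncard + 9 := by ring
    _ ≤ (hexBdry W).ncard ^ 2 + 6 * (hexBdry W).ncard + 9 := by gcongr
    _ = ((hexBdry W).ncard + 3) ^ 2 := by ring
end

section
/- For every integer r ≥ 1, the set W_r = V(G_r) ∪ 𝒩(V(G_r)) ⊆ ℤ×ℤ satisfies |W_r| = 6r² + 6r and |ℬ(W_r)| = 6r; consequently |ℬ(W_r)| = √6 · √(|W_r| + 3/2) − 3, so the boundary-isoperimetric inequality on the infinite hexagonal grid is tight for these sets. -/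
/-!
Call the rows at heights `j + 1` and `-j` the rows of level `j`. For `j < r` each of them meets
`V(G_r)` in an interval of `4r - 1 - 2j` vertices centered at `x = 1`; summing over both rows of
each level gives `6r²`. The neighborhood extends each of these `2r` rows by one vertex at either end
and has `r` alternate vertices on each of the two rows of level `r`, in total `2(2r + r) = 6r`.
The boundary of a closed neighborhood is always contained in the open neighborhood, with equality
for `V(G_r)` because a horizontal step away from the axis `x = 1` leaves `W_r` from every vertex of
`𝒩(V(G_r))`. Finally `6(6r² + 6r + 3/2) = (6r + 3)²`.
-/

lemma hexAdj_comm {v w : ℤ × ℤ} : hexAdj v w ↔ hexAdj w v := by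
  simp only [hexAdj, Int.even_iff]
  omega

lemma hexBdry_union_hexNbhd_subset (W : Set (ℤ × ℤ)) :
    hexBdry (W ∪ hexNbhd W) ⊆ hexNbhd W := by
  rintro v ⟨hv | hv, w, hw, hvw⟩
  · exact absurd (Or.inr ⟨fun hwW => hw (Or.inl hwW), v, hv, hexAdj_comm.mp hvw⟩) hw
  · exact hv

lemma sqrt_six_mul_sqrt_quadratic {x : ℝ} (hx : -1 / 2 ≤ x) :
    √6 * √(6 * x ^ 2 + 6 * x + 3 / 2) = 6 * x + 3 := by
  have hsq : 6 * (6 * x ^ 2 + 6 * x + 3 / 2) = (6 * x + 3) ^ 2 := by ring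
  rw [← Real.sqrt_mul (by norm_num), hsq, Real.sqrt_sq (by linarith)]

/-- The level of the horizontal row at height `y`: its distance from the row pair `{0, 1}` through
the central cell. The rows of level `j` are those at heights `j + 1` and `-j`, swapped by the
reflection `y ↦ 1 - y` that preserves `V(G_r)`. -/
def rowLevel (y : ℤ) : ℕ := (max (y - 1) (-y)).toNat

lemma rowLevel_eq_iff {y : ℤ} {j : ℕ} : rowLevel y = j ↔ y = j + 1 ∨ y = -j := by
  unfold rowLevel
  omega

/-- The set whose two rows of level `j` are both equal to `X j` for `j < n`, with no other
points. -/
def stackedRows {α : Type*} (n : ℕ) (X : ℕ → Finset α) : Set (α × ℤ) :=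
  {v | rowLevel v.2 < n ∧ v.1 ∈ X (rowLevel v.2)}

lemma ncard_stackedRows {α : Type*} (n : ℕ) (X : ℕ → Finset α) :
    (stackedRows n X).ncard = ∑ j ∈ Finset.range n, 2 * (X j).card := by
  classical
  have biUnion_eq : stackedRows n X =
      ↑((Finset.range n).biUnion fun j : ℕ => X j ×ˢ {(j + 1 : ℤ), -(j : ℤ)}) := by
    ext ⟨x, y⟩
    simp [stackedRows, ← rowLevel_eq_iff, and_comm]
  rw [biUnion_eq, Set.ncard_coe_finset, Finset.card_biUnion]
  · refine Finset.sum_congr rfl fun j _ => ?_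
    rw [Finset.card_product, Finset.card_pair (by omega), mul_comm]
  · intro i _ j _ hij
    refine Finset.disjoint_product.mpr (Or.inr ?_)
    simp only [Finset.disjoint_left, Finset.mem_insert, Finset.mem_singleton, ← rowLevel_eq_iff]
    rintro y rfl
    exact hij

lemma mem_hexCell_iff {a b x y : ℤ} :
    (x, y) ∈ hexCell a b ↔ 2 * a + b ≤ x ∧ x ≤ 2 * a + b + 2 ∧ b ≤ y ∧ y ≤ b + 1 := by
  simp only [hexCell, Set.mem_insert_iff, Set.mem_singleton_iff, Prod.mk.injEq]
  omega

lemma mem_gridVerts_iff {r : ℕ} (hr : 1 ≤ r) {x y : ℤ} :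
    (x, y) ∈ gridVerts r ↔ rowLevel y < r ∧ (x - 1).natAbs + rowLevel y < 2 * r := by
  simp only [gridVerts, Set.mem_ofPred_eq, mem_hexCell_iff, rowLevel]
  constructor
  · rintro ⟨a, b, hab, hxy⟩
    omega
  · rintro ⟨hy, hxy⟩
    -- Of the two rows of cells touching height `y`, row `b` is the one closer to the center.
    obtain ⟨b, hb⟩ : ∃ b : ℤ, (1 ≤ y ∧ b = y - 1) ∨ (y ≤ 0 ∧ b = y) := by
      by_cases h : 1 ≤ y
      · exact ⟨y - 1, by omega⟩
      · exact ⟨y, by omega⟩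
    -- The leftmost cell of `G_r` in row `b` has first index `max (1 - r) (1 - r - b)`.
    exact ⟨max ((x - b - 1) / 2) (max (1 - r) (1 - r - b)), b, by omega, by omega⟩

lemma gridVerts_eq_stackedRows {r : ℕ} (hr : 1 ≤ r) :
    gridVerts r = stackedRows r fun j => Finset.Icc (2 - 2 * r + j : ℤ) (2 * r - j) := by
  ext ⟨x, y⟩
  simp only [mem_gridVerts_iff hr, stackedRows, Set.mem_ofPred_eq, Finset.mem_Icc]
  omega

lemma ncard_gridVerts {r : ℕ} (hr : 1 ≤ r) : (gridVerts r).ncard = 6 * r ^ 2 := by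
  have card_row : ∀ j ∈ Finset.range r,
      2 * (Finset.Icc (2 - 2 * r + j : ℤ) (2 * r - j)).card + 4 * j = 8 * r - 2 := by
    intro j hj
    rw [Finset.mem_range] at hj
    rw [Int.card_Icc]
    omega
  have sum_rows : (gridVerts r).ncard + 4 * ∑ j ∈ Finset.range r, j = r * (8 * r - 2) := by
    rw [gridVerts_eq_stackedRows hr, ncard_stackedRows, Finset.mul_sum,
      ← Finset.sum_add_distrib, Finset.sum_congr rfl card_row, Finset.sum_const,
      Finset.card_range, smul_eq_mul]
  have gauss := Finset.sum_range_id_mul_two r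
  zify [hr, show 2 ≤ 8 * r by omega] at sum_rows gauss ⊢
  linear_combination sum_rows - 2 * gauss

lemma mem_hexNbhd_gridVerts_iff {r : ℕ} (hr : 1 ≤ r) {x y : ℤ} :
    (x, y) ∈ hexNbhd (gridVerts r) ↔
      (rowLevel y < r ∧ (x - 1).natAbs + rowLevel y = 2 * r) ∨
      (rowLevel y = r ∧ (x - 1).natAbs < r ∧ Even (x + r)) := by
  simp only [hexNbhd, Set.mem_ofPred_eq, Prod.exists, mem_gridVerts_iff hr, hexAdj,
    Int.even_iff, rowLevel]
  constructor
  · rintro ⟨hv, x', y', hw, hadj⟩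
    omega
  · rintro (hside | hcap)
    · obtain hx | hx := le_or_gt 1 x
      · exact ⟨by omega, x - 1, y, by omega, by omega⟩
      · exact ⟨by omega, x + 1, y, by omega, by omega⟩
    · obtain hy | hy := le_or_gt 1 y
      · exact ⟨by omega, x, y - 1, by omega, by omega⟩
      · exact ⟨by omega, x, y + 1, by omega, by omega⟩

/-- The abscissae of the vertices of `𝒩(V(G_r))` on a row of level `j ≤ r`: the row is extended by
one vertex at each end when `j < r`, and every other vertex is a neighbor when `j = r`. -/
def nbhdRow (r j : ℕ) : Finset ℤ :=
  if j < r then {(1 - 2 * r + j : ℤ), (1 + 2 * r - j : ℤ)}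
  else (Finset.range r).image fun i : ℕ => (2 - r + 2 * i : ℤ)

lemma hexNbhd_gridVerts_eq_stackedRows {r : ℕ} (hr : 1 ≤ r) :
    hexNbhd (gridVerts r) = stackedRows (r + 1) (nbhdRow r) := by
  ext ⟨x, y⟩
  rw [mem_hexNbhd_gridVerts_iff hr]
  simp only [stackedRows, Set.mem_ofPred_eq, nbhdRow, Int.even_iff]
  split_ifs with hy
  · simp only [Finset.mem_insert, Finset.mem_singleton]
    omega
  · simp only [Finset.mem_image, Finset.mem_range]
    constructor
    · intro hx
      exact ⟨by omega, ((x + r - 2) / 2).toNat, by omega, by omega⟩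
    · rintro ⟨hy', i, hi, rfl⟩
      omega

lemma card_nbhdRow_of_lt {r j : ℕ} (hj : j < r) : (nbhdRow r j).card = 2 := by
  rw [nbhdRow, if_pos hj, Finset.card_pair (by omega)]

lemma card_nbhdRow_self (r : ℕ) : (nbhdRow r r).card = r := by
  rw [nbhdRow, if_neg (lt_irrefl r), Finset.card_image_of_injective _ fun i j hij => by grind,
    Finset.card_range]

lemma ncard_hexNbhd_gridVerts {r : ℕ} (hr : 1 ≤ r) : (hexNbhd (gridVerts r)).ncard = 6 * r := by
  have card_row : ∀ j ∈ Finset.range r, 2 * (nbhdRow r j).card = 4 := fun j hj => by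
    rw [card_nbhdRow_of_lt (Finset.mem_range.mp hj)]
  calc (hexNbhd (gridVerts r)).ncard
      = ∑ j ∈ Finset.range r, 2 * (nbhdRow r j).card + 2 * (nbhdRow r r).card := by
        rw [hexNbhd_gridVerts_eq_stackedRows hr, ncard_stackedRows, Finset.sum_range_succ]
    _ = r * 4 + 2 * r := by
        rw [Finset.sum_const_nat card_row, Finset.card_range, card_nbhdRow_self]
    _ = 6 * r := by ring

lemma ncard_gridVerts_union_hexNbhd {r : ℕ} (hr : 1 ≤ r) :
    (gridVerts r ∪ hexNbhd (gridVerts r)).ncard = 6 * r ^ 2 + 6 * r := by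
  have hdisj : Disjoint (gridVerts r) (hexNbhd (gridVerts r)) :=
    Set.disjoint_right.mpr fun _ hv => hv.1
  have hV := ncard_gridVerts hr
  have hN := ncard_hexNbhd_gridVerts hr
  rw [Set.ncard_union_eq hdisj (Set.finite_of_ncard_pos (by rw [hV]; positivity))
    (Set.finite_of_ncard_pos (by rw [hN]; positivity)), hV, hN]

lemma hexNbhd_gridVerts_subset_hexBdry {r : ℕ} (hr : 1 ≤ r) :
    hexNbhd (gridVerts r) ⊆ hexBdry (gridVerts r ∪ hexNbhd (gridVerts r)) := by
  rintro ⟨x, y⟩ hv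
  refine ⟨Or.inr hv, ?_⟩
  simp only [Prod.exists, Set.mem_union, mem_gridVerts_iff hr, mem_hexNbhd_gridVerts_iff hr,
    hexAdj, Int.even_iff] at hv ⊢
  obtain hx | hx := le_or_gt 1 x
  · exact ⟨x + 1, y, by omega, by omega⟩
  · exact ⟨x - 1, y, by omega, by omega⟩

lemma hexBdry_gridVerts_union_hexNbhd {r : ℕ} (hr : 1 ≤ r) :
    hexBdry (gridVerts r ∪ hexNbhd (gridVerts r)) = hexNbhd (gridVerts r) :=
  (hexBdry_union_hexNbhd_subset _).antisymm (hexNbhd_gridVerts_subset_hexBdry hr)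

/-- For every `r ≥ 1`, the set `W_r = V(G_r) ∪ 𝒩(V(G_r))` satisfies `|W_r| = 6r² + 6r`
and `|ℬ(W_r)| = 6r`, hence `|ℬ(W_r)| = √6 · √(|W_r| + 3/2) - 3`: the boundary
isoperimetric inequality is tight for these sets. -/
theorem boundary_isoperimetric_tight (r : ℕ) (hr : 1 ≤ r) :
    (gridVerts r ∪ hexNbhd (gridVerts r)).ncard = 6*r^2 + 6*r ∧
    (hexBdry (gridVerts r ∪ hexNbhd (gridVerts r))).ncard = 6*r ∧
    ((hexBdry (gridVerts r ∪ hexNbhd (gridVerts r))).ncard : ℝ) =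
      Real.sqrt 6 * Real.sqrt (((gridVerts r ∪ hexNbhd (gridVerts r)).ncard : ℝ) + 3/2) - 3 := by
  have card_closedNbhd := ncard_gridVerts_union_hexNbhd hr
  have card_bdry : (hexBdry (gridVerts r ∪ hexNbhd (gridVerts r))).ncard = 6 * r := by
    rw [hexBdry_gridVerts_union_hexNbhd hr, ncard_hexNbhd_gridVerts hr]
  refine ⟨card_closedNbhd, card_bdry, ?_⟩
  rw [card_closedNbhd, card_bdry]
  push_cast
  rw [sqrt_six_mul_sqrt_quadratic (by linarith [r.cast_nonneg (α := ℝ)]), add_sub_cancel_right]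
end

section
/- For every integer r ≥ 1, the number of neighbor vertices of V(G_r) in the infinite hexagonal grid satisfies |𝒩(V(G_r))| = 6r. -/
/-!
Number the rows so that a vertex `v` has coordinates `c = (ind₁ v, -ind₂ v, 1 - ind₃ v)`. This
identifies the vertices of `G∞` with the integer triples of coordinate sum `1` or `2`, adjacency
becomes a unit step along one coordinate axis, and `V(G_r)` becomes the cube `[1 - r, r]³`.
A neighbor of this cube overshoots exactly one of its six faces by a unit step. Beyond the face
`c i = 1 - r` this means `c i = -r`, and the coordinate sum is `1` since the step back increases it;
the other two coordinates lie in `[1 - r, r]` and sum to `r + 1`, which has exactly `r` solutions.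
The reflection `c ↦ 1 - c` exchanges opposite faces, so there are `6 * r` neighbors in total.
-/

theorem sum_fin_three_cyclic {M : Type*} [AddCommMonoid M] (f : Fin 3 → M) (i : Fin 3) :
    ∑ j, f j = f i + f (i + 1) + f (i + 2) := by
  rw [Fin.sum_univ_three]
  fin_cases i
  · rfl
  · exact (add_assoc _ _ _).trans (add_comm _ _)
  · exact (add_comm _ _).trans (add_assoc _ _ _).symm

theorem fin_three_eq_or_eq_add_one_or_eq_add_two (i j : Fin 3) : j = i ∨ j = i + 1 ∨ j = i + 2 := by
  omega

theorem fin_three_eq_add_single_iff {M : Type*} [AddZeroClass M] {c d : Fin 3 → M}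
    {i : Fin 3} {x : M} :
    c = d + Pi.single i x ↔ c i = d i + x ∧ c (i + 1) = d (i + 1) ∧ c (i + 2) = d (i + 2) := by
  refine ⟨fun h ↦ by simp [h], fun ⟨h₀, h₁, h₂⟩ ↦ funext fun j ↦ ?_⟩
  obtain rfl | rfl | rfl := fin_three_eq_or_eq_add_one_or_eq_add_two i j <;> simp [*]

theorem sub_mem_Icc_sub_self_iff {α : Type*} [AddCommGroup α] [PartialOrder α]
    [IsOrderedAddMonoid α] {a b x : α} :
    a - x ∈ Set.Icc (a - b) b ↔ x ∈ Set.Icc (a - b) b := by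
  rw [Set.sub_mem_Icc_iff_right, sub_sub_cancel]

/-- The symmetric coordinates of a vertex: its three row indices, with the last two reversed and the
third one shifted so that the three coordinates play the same role. -/
def hexCoord (v : ℤ × ℤ) : Fin 3 → ℤ :=
  ![rowInd 0 v, -rowInd 1 v, 1 - rowInd 2 v]

theorem hexCoord_mk (x y : ℤ) :
    hexCoord (x, y) = ![y, -((y - x) / 2), 1 - (x + y) / 2] := by
  simp only [hexCoord, rowInd, Int.fdiv_eq_ediv_of_nonneg _ zero_le_two]

theorem sum_hexCoord (v : ℤ × ℤ) : ∑ i, hexCoord v i = 1 ∨ ∑ i, hexCoord v i = 2 := by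
  obtain ⟨x, y⟩ := v
  simp only [hexCoord_mk, Fin.sum_univ_three, Matrix.cons_val]
  omega

theorem hexCoord_injective : Function.Injective hexCoord := by
  rintro ⟨x, y⟩ ⟨x', y'⟩ h
  simp only [hexCoord_mk, Matrix.vecCons_inj, and_true] at h
  ext <;> dsimp only <;> omega

theorem exists_hexCoord_eq {c : Fin 3 → ℤ} (hc : ∑ i, c i = 1 ∨ ∑ i, c i = 2) :
    ∃ v, hexCoord v = c := by
  rw [Fin.sum_univ_three] at hc
  refine ⟨(c 1 - c 2 + 1, c 0), ?_⟩
  ext i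
  fin_cases i <;> simp only [hexCoord_mk, Fin.reduceFinMk, Fin.zero_eta, Fin.mk_one,
    Matrix.cons_val] <;> omega

theorem hexAdj_iff_hexCoord {v w : ℤ × ℤ} :
    hexAdj v w ↔ ∃ i, hexCoord v = hexCoord w + Pi.single i 1 ∨
      hexCoord w = hexCoord v + Pi.single i 1 := by
  obtain ⟨x, y⟩ := v
  obtain ⟨x', y'⟩ := w
  simp only [hexAdj, Int.even_iff, hexCoord_mk]
  constructor
  · rintro (⟨rfl, hx⟩ | ⟨rfl, hy, heven⟩)
    · by_cases hpar : (min x x' + y) % 2 = 0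
      · refine ⟨1, ?_⟩
        simp only [fin_three_eq_add_single_iff, Matrix.cons_val, Fin.reduceAdd, and_true]
        omega
      · refine ⟨2, ?_⟩
        simp only [fin_three_eq_add_single_iff, Matrix.cons_val, Fin.reduceAdd, true_and]
        omega
    · refine ⟨0, ?_⟩
      simp only [fin_three_eq_add_single_iff, Matrix.cons_val, Fin.reduceAdd]
      omega
  · rintro ⟨i, h⟩
    simp only [fin_three_eq_add_single_iff] at h
    fin_cases i <;>
    · simp only [Fin.zero_eta, Fin.mk_one, Fin.reduceFinMk, Fin.reduceAdd, Matrix.cons_val] at h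
      omega

theorem hexCell_eq_preimage_Icc (a b : ℤ) :
    hexCell a b = hexCoord ⁻¹' Set.Icc ![b, a, -(a + b)] (![b, a, -(a + b)] + 1) := by
  ext ⟨x, y⟩
  simp only [hexCell, hexCoord_mk, Set.mem_insert_iff, Set.mem_singleton_iff, Prod.mk.injEq,
    Set.mem_preimage, Set.mem_Icc, Pi.le_def, Fin.forall_fin_succ, Pi.add_apply, Pi.one_apply,
    Matrix.cons_val_zero, Matrix.cons_val_succ, IsEmpty.forall_iff, and_true]
  omega

/-- The lower corners `m` of the unit cubes `[m, m + 1]` that correspond to the cells of `G_r`. -/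
def gridCorners (r : ℕ) : Set (Fin 3 → ℤ) :=
  {m | ∑ i, m i = 0 ∧ ∀ i, m i ∈ Set.Icc (1 - (r : ℤ)) (r - 1)}

theorem mem_gridVerts_iff_exists_unitCube {r : ℕ} (hr : 1 ≤ r) {v : ℤ × ℤ} :
    v ∈ gridVerts r ↔ ∃ m ∈ gridCorners r, hexCoord v ∈ Set.Icc m (m + 1) := by
  simp only [gridVerts, hexCell_eq_preimage_Icc]
  constructor
  · rintro ⟨a, b, hab, hv⟩
    refine ⟨![b, a, -(a + b)], ⟨?_, ?_⟩, hv⟩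
    · simp only [Fin.sum_univ_three, Matrix.cons_val]
      ring
    · simp only [Set.mem_Icc, Fin.forall_fin_succ, Matrix.cons_val_zero, Matrix.cons_val_succ,
        IsEmpty.forall_iff, and_true]
      omega
  · rintro ⟨m, ⟨hsum, hm⟩, hv⟩
    rw [Fin.sum_univ_three] at hsum
    have hm_eq : ![m 0, m 1, -(m 1 + m 0)] = m := by
      rw [show -(m 1 + m 0) = m 2 by omega]
      exact FinVec.etaExpand_eq m
    refine ⟨m 1, m 0, ?_, ?_⟩
    · have hm₀ := Set.mem_Icc.mp (hm 0)
      have hm₁ := Set.mem_Icc.mp (hm 1)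
      have hm₂ := Set.mem_Icc.mp (hm 2)
      omega
    · rwa [Set.mem_preimage, hm_eq]

theorem exists_unitCube_of_sum_eq_one {r : ℕ} {c : Fin 3 → ℤ} (hsum : ∑ i, c i = 1)
    (hc : ∀ i, c i ∈ Set.Icc (1 - (r : ℤ)) r) :
    ∃ m ∈ gridCorners r, c ∈ Set.Icc m (m + 1) := by
  obtain ⟨i, hmax⟩ := Finite.exists_max c
  -- Two coordinates equal to `r` would force the third one below `1 - r`.
  refine ⟨c - Pi.single i 1, ⟨by simp [hsum], ?_⟩, fun j ↦ ?_, fun j ↦ ?_⟩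
  · rw [sum_fin_three_cyclic c i] at hsum
    have hmax₁ := hmax (i + 1)
    have hmax₂ := hmax (i + 2)
    have hc₀ := Set.mem_Icc.mp (hc i)
    have hc₁ := Set.mem_Icc.mp (hc (i + 1))
    have hc₂ := Set.mem_Icc.mp (hc (i + 2))
    intro j
    obtain rfl | rfl | rfl := fin_three_eq_or_eq_add_one_or_eq_add_two i j <;>
      simp only [Pi.sub_apply, Pi.single_apply, add_eq_left, if_true, if_false,
        Fin.reduceEq, Set.mem_Icc] <;> omega
  · obtain rfl | hji := eq_or_ne j i <;> simp [*]
  · obtain rfl | hji := eq_or_ne j i <;> simp [*]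

theorem exists_unitCube_of_sum_eq_two {r : ℕ} {c : Fin 3 → ℤ} (hsum : ∑ i, c i = 2)
    (hc : ∀ i, c i ∈ Set.Icc (1 - (r : ℤ)) r) :
    ∃ m ∈ gridCorners r, c ∈ Set.Icc m (m + 1) := by
  obtain ⟨m, ⟨hm_sum, hm⟩, hcm⟩ := exists_unitCube_of_sum_eq_one (r := r) (c := 1 - c)
    (by simp [hsum]) fun i ↦ sub_mem_Icc_sub_self_iff.mpr (hc i)
  refine ⟨-m, ⟨by simp [hm_sum], fun i ↦ ?_⟩, ?_⟩
  · simpa only [Pi.neg_apply, Set.neg_mem_Icc_iff, neg_sub] using hm i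
  · rwa [Set.sub_mem_Icc_iff_right, sub_add_cancel_right, sub_eq_neg_add] at hcm

theorem gridVerts_eq_preimage_Icc {r : ℕ} (hr : 1 ≤ r) :
    gridVerts r = hexCoord ⁻¹' Set.Icc (fun _ ↦ 1 - (r : ℤ)) (fun _ ↦ (r : ℤ)) := by
  ext v
  rw [mem_gridVerts_iff_exists_unitCube hr, Set.mem_preimage]
  constructor
  · rintro ⟨m, ⟨-, hm⟩, hv⟩
    refine ⟨fun i ↦ (hm i).1.trans (hv.1 i), fun i ↦ (hv.2 i).trans ?_⟩
    exact Int.add_le_of_le_sub_right (hm i).2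
  · rintro ⟨hlower, hupper⟩
    have hv i : hexCoord v i ∈ Set.Icc (1 - (r : ℤ)) r := ⟨hlower i, hupper i⟩
    rcases sum_hexCoord v with hsum | hsum
    · exact exists_unitCube_of_sum_eq_one hsum hv
    · exact exists_unitCube_of_sum_eq_two hsum hv

theorem mem_hexNbhd_preimage_Icc {a b : Fin 3 → ℤ} (hab : a ≤ b) {v : ℤ × ℤ} :
    v ∈ hexNbhd (hexCoord ⁻¹' Set.Icc a b) ↔
      ∃ i, (∀ j ≠ i, hexCoord v j ∈ Set.Icc (a j) (b j)) ∧
        (hexCoord v i = a i - 1 ∧ ∑ j, hexCoord v j = 1 ∨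
          hexCoord v i = b i + 1 ∧ ∑ j, hexCoord v j = 2) := by
  simp only [hexNbhd, Set.mem_ofPred_eq, Set.mem_preimage, ← Set.pi_univ_Icc, Set.mem_univ_pi]
  constructor
  · rintro ⟨hv, w, hw, hvw⟩
    obtain ⟨i, hstep⟩ := hexAdj_iff_hexCoord.mp hvw
    have hvj (j) (hji : j ≠ i) : hexCoord v j ∈ Set.Icc (a j) (b j) := by
      have hvw_eq : hexCoord v j = hexCoord w j := by
        rcases hstep with h | h <;> simp [h, hji]
      exact hvw_eq ▸ hw j
    have hvi : hexCoord v i ∉ Set.Icc (a i) (b i) := fun hvi ↦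
      hv fun j ↦ if hji : j = i then hji ▸ hvi else hvj j hji
    have hwi := hw i
    rw [Set.mem_Icc] at hvi hwi
    have hv_sum := sum_hexCoord v
    have hw_sum := sum_hexCoord w
    refine ⟨i, hvj, ?_⟩
    rcases hstep with h | h
    all_goals
      have hi := congrFun h i
      have hsum := congrArg (fun c ↦ ∑ j, c j) h
      simp only [Pi.add_apply, Pi.single_eq_same, Finset.sum_add_distrib, Finset.sum_pi_single',
        Finset.mem_univ, if_true] at hi hsum
      omega
  · rintro ⟨i, hj, ⟨hi, hsum⟩ | ⟨hi, hsum⟩⟩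
    · obtain ⟨w, hw⟩ := exists_hexCoord_eq (c := hexCoord v + Pi.single i 1)
        (by simp [Finset.sum_add_distrib, hsum])
      refine ⟨fun hv ↦ ?_, w, fun j ↦ ?_, hexAdj_iff_hexCoord.mpr ⟨i, .inr hw⟩⟩
      · linarith [(hv i).1]
      · obtain rfl | hji := eq_or_ne j i
        · simp [hw, hi, hab j]
        · simpa [hw, hji] using hj j hji
    · obtain ⟨w, hw⟩ := exists_hexCoord_eq (c := hexCoord v - Pi.single i 1) (by simp [hsum])
      refine ⟨fun hv ↦ ?_, w, fun j ↦ ?_, hexAdj_iff_hexCoord.mpr ⟨i, .inl (by simp [hw])⟩⟩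
      · linarith [(hv i).2]
      · obtain rfl | hji := eq_or_ne j i
        · simp [hw, hi, hab j]
        · simpa [hw, hji] using hj j hji

theorem mem_hexNbhd_gridVerts {r : ℕ} (hr : 1 ≤ r) {v : ℤ × ℤ} :
    v ∈ hexNbhd (gridVerts r) ↔
      ∃ i, (∀ j ≠ i, hexCoord v j ∈ Set.Icc (1 - (r : ℤ)) r) ∧
        (hexCoord v i = -r ∧ ∑ j, hexCoord v j = 1 ∨
          hexCoord v i = r + 1 ∧ ∑ j, hexCoord v j = 2) := by
  rw [gridVerts_eq_preimage_Icc hr, mem_hexNbhd_preimage_Icc fun _ ↦ by dsimp only; omega]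
  simp only [sub_sub_cancel_left]

/-- In symmetric coordinates `c`, the `k`-th of the `r` neighbors of `V(G_r)` beyond its side
`c i = 1 - r`, for `p = (i, k)`. The neighbors beyond the opposite side `c i = r` are the images of
these under `c ↦ 1 - c`. -/
def sideNeighbor (r : ℕ) (p : Fin 3 × Fin r) : Fin 3 → ℤ :=
  fun j ↦ if j = p.1 then -r else if j = p.1 + 1 then p.2 + 1 else r - p.2

theorem sideNeighbor_apply_self {r : ℕ} (i : Fin 3) (k : Fin r) :
    sideNeighbor r (i, k) i = -r := by
  simp [sideNeighbor]

theorem sideNeighbor_apply_add_one {r : ℕ} (i : Fin 3) (k : Fin r) :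
    sideNeighbor r (i, k) (i + 1) = k + 1 := by
  simp [sideNeighbor]

theorem sideNeighbor_apply_add_two {r : ℕ} (i : Fin 3) (k : Fin r) :
    sideNeighbor r (i, k) (i + 2) = r - k := by
  simp [sideNeighbor]

theorem sum_sideNeighbor {r : ℕ} (p : Fin 3 × Fin r) : ∑ j, sideNeighbor r p j = 1 := by
  obtain ⟨i, k⟩ := p
  rw [sum_fin_three_cyclic _ i, sideNeighbor_apply_self, sideNeighbor_apply_add_one,
    sideNeighbor_apply_add_two]
  ring

theorem sideNeighbor_nonpos_iff {r : ℕ} {i j : Fin 3} {k : Fin r} :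
    sideNeighbor r (i, k) j ≤ 0 ↔ j = i := by
  obtain rfl | rfl | rfl := fin_three_eq_or_eq_add_one_or_eq_add_two i j
  · simp [sideNeighbor_apply_self]
  · simp [sideNeighbor_apply_add_one]
  · simp [sideNeighbor_apply_add_two]

theorem sideNeighbor_injective (r : ℕ) : Function.Injective (sideNeighbor r) := by
  rintro ⟨i, k⟩ ⟨i', k'⟩ h
  obtain rfl : i = i' := by
    rw [← sideNeighbor_nonpos_iff (k := k'), ← h, sideNeighbor_nonpos_iff]
  have hk : (k : ℤ) + 1 = k' + 1 := by
    rw [← sideNeighbor_apply_add_one i k, h, sideNeighbor_apply_add_one]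
  rw [Prod.mk.injEq, Fin.ext_iff]
  omega

theorem mem_range_sideNeighbor {r : ℕ} {c : Fin 3 → ℤ} :
    c ∈ Set.range (sideNeighbor r) ↔
      ∃ i, (∀ j ≠ i, c j ∈ Set.Icc (1 - (r : ℤ)) r) ∧ c i = -r ∧ ∑ j, c j = 1 := by
  constructor
  · rintro ⟨⟨i, k⟩, rfl⟩
    refine ⟨i, fun j hji ↦ ?_, sideNeighbor_apply_self i k, sum_sideNeighbor _⟩
    simp only [sideNeighbor, if_neg hji, Set.mem_Icc]
    split_ifs <;> omega
  · rintro ⟨i, hc, hi, hsum⟩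
    rw [sum_fin_three_cyclic c i] at hsum
    have hc₁ := Set.mem_Icc.mp (hc (i + 1) (by simp))
    have hc₂ := Set.mem_Icc.mp (hc (i + 2) (by simp))
    obtain ⟨k, hk⟩ : ∃ k : Fin r, (k : ℤ) = c (i + 1) - 1 :=
      ⟨⟨(c (i + 1) - 1).toNat, by omega⟩, Int.toNat_of_nonneg (by omega)⟩
    refine ⟨(i, k), funext fun j ↦ ?_⟩
    obtain rfl | rfl | rfl := fin_three_eq_or_eq_add_one_or_eq_add_two i j
    · rw [sideNeighbor_apply_self, hi]
    · rw [sideNeighbor_apply_add_one]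
      omega
    · rw [sideNeighbor_apply_add_two]
      omega

theorem mem_range_one_sub_sideNeighbor {r : ℕ} {c : Fin 3 → ℤ} :
    c ∈ Set.range (fun p ↦ 1 - sideNeighbor r p) ↔
      ∃ i, (∀ j ≠ i, c j ∈ Set.Icc (1 - (r : ℤ)) r) ∧ c i = r + 1 ∧ ∑ j, c j = 2 := by
  have hrefl :
      c ∈ Set.range (fun p ↦ 1 - sideNeighbor r p) ↔ 1 - c ∈ Set.range (sideNeighbor r) :=
    exists_congr fun p ↦ by rw [sub_eq_iff_eq_add, eq_sub_iff_add_eq', eq_comm]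
  have hface (i) : 1 - c i = -r ↔ c i = r + 1 := by omega
  have hsum : ∑ j, (1 - c j) = 1 ↔ ∑ j, c j = 2 := by
    rw [Finset.sum_sub_distrib, Fin.sum_const]
    norm_num
    omega
  simp only [hrefl, mem_range_sideNeighbor, Pi.sub_apply, Pi.one_apply, sub_mem_Icc_sub_self_iff,
    hface, hsum]

/-- The neighbors of `V(G_r)` beyond its six sides, in symmetric coordinates: `Sum.inl` is for the
sides `c i = 1 - r` and `Sum.inr` for the opposite sides `c i = r`. -/
def gridNeighbor (r : ℕ) : (Fin 3 × Fin r) ⊕ (Fin 3 × Fin r) → Fin 3 → ℤ :=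
  Sum.elim (sideNeighbor r) fun p ↦ 1 - sideNeighbor r p

theorem gridNeighbor_injective (r : ℕ) : Function.Injective (gridNeighbor r) := by
  refine (sideNeighbor_injective r).sumElim
    (sub_right_injective.comp (sideNeighbor_injective r)) fun p q h ↦ ?_
  have hsum : ∑ j, sideNeighbor r p j = ∑ j, (1 - sideNeighbor r q) j := by rw [h]
  simp [sum_sideNeighbor] at hsum

theorem image_hexCoord_hexNbhd_gridVerts {r : ℕ} (hr : 1 ≤ r) :
    hexCoord '' hexNbhd (gridVerts r) = Set.range (gridNeighbor r) := by
  ext c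
  simp only [gridNeighbor, Set.Sum.elim_range, Set.mem_union, mem_range_sideNeighbor,
    mem_range_one_sub_sideNeighbor, ← exists_or, ← and_or_left]
  constructor
  · rintro ⟨v, hv, rfl⟩
    exact (mem_hexNbhd_gridVerts hr).mp hv
  · rintro ⟨i, hj, hi⟩
    obtain ⟨v, rfl⟩ := exists_hexCoord_eq (hi.imp And.right And.right)
    exact ⟨v, (mem_hexNbhd_gridVerts hr).mpr ⟨i, hj, hi⟩, rfl⟩

/-- For every `r ≥ 1`, `|𝒩(V(G_r))| = 6r`. -/
theorem card_nbhd_gridVerts (r : ℕ) (hr : 1 ≤ r) :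
    (hexNbhd (gridVerts r)).ncard = 6*r := by
  calc (hexNbhd (gridVerts r)).ncard
    _ = (hexCoord '' hexNbhd (gridVerts r)).ncard :=
      (Set.ncard_image_of_injective _ hexCoord_injective).symm
    _ = (Set.range (gridNeighbor r)).ncard := by rw [image_hexCoord_hexNbhd_gridVerts hr]
    _ = Nat.card ((Fin 3 × Fin r) ⊕ (Fin 3 × Fin r)) :=
      Set.ncard_range_of_injective (gridNeighbor_injective r)
    _ = 3 * r + 3 * r := by simp
    _ = 6 * r := by ring
end

section
/- For every finite nonempty subset W of the vertices of the infinite hexagonal grid G∞, no vertex of G∞ is an outermost neighbor (with respect to W) for all three directions simultaneously; that is, every vertex is an outermost neighbor for at most two of the three directions. -/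
/-! Deleting the direction-`i` edges leaves each vertex `v` with two neighbors, those across the
edges of the other two directions, and they are the vertices next to `v` in its direction-`i` row.
If `v` is an outermost neighbor for direction `i`, exactly one of them lies in `W`. For all three
directions at once, `W` would have to separate every pair among the three neighbors of `v`, which
no set can do. -/

theorem injOn_rowParam (i : Fin 3) (c : ℤ) : Set.InjOn (rowParam i) {v | rowInd i v = c} := by
  rintro ⟨x, y⟩ hu ⟨x', y'⟩ hw hparam
  fin_cases i <;>
    simp only [rowInd, rowParam, Set.mem_ofPred_eq, Int.fdiv_eq_ediv_of_nonneg _ zero_le_two,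
      Prod.mk.injEq] at hu hw hparam ⊢ <;>
    omega

theorem rowParam_mem_image_iff {W : Set (ℤ × ℤ)} {i : Fin 3} {u v : ℤ × ℤ}
    (hu : rowInd i u = rowInd i v) :
    rowParam i u ∈ rowParam i '' {w ∈ W | rowInd i w = rowInd i v} ↔ u ∈ W :=
  ((injOn_rowParam i (rowInd i v)).mem_image_iff (fun _ hw => hw.2) hu).trans
    (and_iff_left hu)

theorem hexAdj.natAbs_rowParam_sub_eq_one {i : Fin 3} {v u : ℤ × ℤ} (hadj : hexAdj v u)
    (hu : rowInd i u = rowInd i v) : (rowParam i u - rowParam i v).natAbs = 1 := by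
  fin_cases i <;>
    simp only [hexAdj, rowInd, rowParam, Int.even_iff,
      Int.fdiv_eq_ediv_of_nonneg _ zero_le_two] at hadj hu ⊢ <;>
    omega

theorem IsOutermostNeighbor.mem_iff_notMem_of_hexAdj {W : Set (ℤ × ℤ)} {i : Fin 3}
    {v u w : ℤ × ℤ} (h : IsOutermostNeighbor W i v) (hvu : hexAdj v u) (hvw : hexAdj v w)
    (hu : rowInd i u = rowInd i v) (hw : rowInd i w = rowInd i v) (huw : u ≠ w) :
    u ∈ W ↔ w ∉ W := by
  have hparam_ne : rowParam i u ≠ rowParam i w := (injOn_rowParam i _).ne hu hw huw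
  wlog hlt : rowParam i w < rowParam i u generalizing u w
  · exact iff_not_comm.1 (this hvw hvu hw hu huw.symm hparam_ne.symm (by omega))
  have hu_dist := hvu.natAbs_rowParam_sub_eq_one hu
  have hw_dist := hvw.natAbs_rowParam_sub_eq_one hw
  have hu_param : rowParam i v + 1 = rowParam i u := by omega
  have hw_param : rowParam i v - 1 = rowParam i w := by omega
  rw [IsOutermostNeighbor, hu_param, hw_param, rowParam_mem_image_iff hu,
    rowParam_mem_image_iff hw] at h
  rcases h with ⟨huW, hmin⟩ | ⟨hwW, hmax⟩
  · exact iff_of_true huW fun hwW =>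
      hlt.not_ge (hmin _ ((rowParam_mem_image_iff hw).2 hwW))
  · exact iff_of_false
      (fun huW => hlt.not_ge (hmax _ ((rowParam_mem_image_iff hu).2 huW))) (not_not_intro hwW)

/-- The orientation of a vertex in the bipartition of `G∞`: the direction-`1` edge at `v` leads up
and its direction-`2` edge leads right if the sign is `1`; they lead down and left if it is `-1`. -/
def hexSign (v : ℤ × ℤ) : ℤ := if Even (v.1 + v.2) then 1 else -1

/-- The neighbor of `v` in `G∞` across its edge of direction `j`, with the directions numbered
`0, 1, 2` as in `rowInd`. -/
def hexNeighbor : Fin 3 → ℤ × ℤ → ℤ × ℤ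
  | 0, v => (v.1, v.2 + hexSign v)
  | 1, v => (v.1 + hexSign v, v.2)
  | 2, v => (v.1 - hexSign v, v.2)

theorem hexAdj_hexNeighbor (j : Fin 3) (v : ℤ × ℤ) : hexAdj v (hexNeighbor j v) := by
  fin_cases j <;> simp only [hexAdj, hexNeighbor, hexSign, Int.even_iff, true_and] <;>
    split_ifs <;> omega

theorem rowInd_hexNeighbor {i j : Fin 3} (hij : i ≠ j) (v : ℤ × ℤ) :
    rowInd i (hexNeighbor j v) = rowInd i v := by
  fin_cases i <;> fin_cases j <;> try exact absurd rfl hij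
  all_goals
    simp only [rowInd, hexNeighbor, hexSign, Int.even_iff, Int.fdiv_eq_ediv_of_nonneg _ zero_le_two]
  all_goals split_ifs <;> omega

theorem hexNeighbor_injective (v : ℤ × ℤ) : Function.Injective (hexNeighbor · v) := by
  intro j k hjk
  fin_cases j <;> fin_cases k <;>
    simp only [hexNeighbor, hexSign, Prod.ext_iff] at hjk ⊢ <;> split_ifs at hjk <;> omega

theorem IsOutermostNeighbor.hexNeighbor_mem_iff_notMem {W : Set (ℤ × ℤ)} {i j k : Fin 3}
    {v : ℤ × ℤ} (h : IsOutermostNeighbor W i v) (hij : i ≠ j) (hik : i ≠ k) (hjk : j ≠ k) :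
    hexNeighbor j v ∈ W ↔ hexNeighbor k v ∉ W :=
  h.mem_iff_notMem_of_hexAdj (hexAdj_hexNeighbor j v) (hexAdj_hexNeighbor k v)
    (rowInd_hexNeighbor hij v) (rowInd_hexNeighbor hik v) ((hexNeighbor_injective v).ne hjk)

theorem outermost_neighbor_at_most_two_directions_general (W : Set (ℤ × ℤ)) (v : ℤ × ℤ) :
    ¬ ∀ i : Fin 3, IsOutermostNeighbor W i v := by
  intro h
  have h₀₁ : hexNeighbor 0 v ∈ W ↔ hexNeighbor 1 v ∉ W :=
    (h 2).hexNeighbor_mem_iff_notMem (by decide) (by decide) (by decide)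
  have h₀₂ : hexNeighbor 0 v ∈ W ↔ hexNeighbor 2 v ∉ W :=
    (h 1).hexNeighbor_mem_iff_notMem (by decide) (by decide) (by decide)
  have h₁₂ : hexNeighbor 1 v ∈ W ↔ hexNeighbor 2 v ∉ W :=
    (h 0).hexNeighbor_mem_iff_notMem (by decide) (by decide) (by decide)
  tauto

/-- No vertex of the infinite hexagonal grid is an outermost neighbor (with respect to a
finite nonempty set `W`) for all three directions simultaneously. -/
theorem outermost_neighbor_at_most_two_directions (W : Set (ℤ × ℤ)) (hW : W.Finite)
    (hne : W.Nonempty) (v : ℤ × ℤ) :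
    ¬ (∀ i : Fin 3, IsOutermostNeighbor W i v) :=
  outermost_neighbor_at_most_two_directions_general W v
end
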